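/- For each Dyck path λ of order n, the maps σ ↦ DTS(λ,σ) and σ ↦ DTR(λ,σ) are bijections from the set L(P_λ) of linear extensions of the chord poset of λ onto the set D(λ,*) of cover-inclusive Dyck tilings whose lower path is λ. -/

import Mathlib

open Finset

noncomputable section

/-- A Dyck path of order `n`: a word of `2n` steps (`true` = up-step `(+1,+1)`,
`false` = down-step `(+1,-1)`) from `(-n,0)` to `(n,0)` staying weakly above the x-axis. -/
structure DyckPath (n : ℕ) where
  step : Fin (2 * n) → Bool
  balanced : (Finset.univ.filter fun i => step i = true).card = n
  nonneg : ∀ k : ℕ, k ≤ 2 * n →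
    (Finset.univ.filter fun i : Fin (2 * n) => (i : ℕ) < k ∧ step i = false).card ≤
      (Finset.univ.filter fun i : Fin (2 * n) => (i : ℕ) < k ∧ step i = true).card

namespace DyckPath

/-- Height of the path above column `x` (columns run from `-n` to `n`). -/
def ht {n : ℕ} (P : DyckPath n) (x : ℤ) : ℤ :=
  ((Finset.univ.filter fun i : Fin (2 * n) => ((i : ℕ) : ℤ) < x + n ∧ P.step i = true).card : ℤ) -
    ((Finset.univ.filter fun i : Fin (2 * n) => ((i : ℕ) : ℤ) < x + n ∧ P.step i = false).card : ℤ)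

/-- Height of the path at lattice point number `k`, `0 ≤ k ≤ 2n`
(point `k` lies at column `k - n`). -/
def pt {n : ℕ} (P : DyckPath n) (k : ℕ) : ℤ := P.ht ((k : ℤ) - n)

end DyckPath

/-- `IsChord P p q`: the up-step at (0-indexed) position `p` matches the down-step at
position `q`, forming a chord of `P`. -/
def IsChord {n : ℕ} (P : DyckPath n) (p q : ℕ) : Prop :=
  p < q ∧ q < 2 * n ∧
    (∃ hp : p < 2 * n, P.step ⟨p, hp⟩ = true) ∧
    (∃ hq : q < 2 * n, P.step ⟨q, hq⟩ = false) ∧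
    P.pt (q + 1) = P.pt p ∧
    ∀ m : ℕ, p < m → m ≤ q → P.pt p < P.pt m

/-- A natural labeling of the chord poset of `P`: the chord labeled `i` has its up-step at
(0-indexed) position `l i` and matching down-step at position `r i`; distinct labels name
distinct chords; and if one chord is nested inside another it receives a larger label. -/
structure ChordLabeling {n : ℕ} (P : DyckPath n) where
  l : Fin n → ℕ
  r : Fin n → ℕ
  chord : ∀ i, IsChord P (l i) (r i)
  inj : Function.Injective l
  natural : ∀ i j : Fin n, l j < l i → r i < r j → j < i

/-- The length of the chord labeled `i`: the number of up steps of `P` between and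
including its two endpoints. -/
def chordLen {n : ℕ} {P : DyckPath n} (C : ChordLabeling P) (i : Fin n) : ℕ :=
  (Finset.univ.filter fun m : Fin (2 * n) =>
    C.l i ≤ (m : ℕ) ∧ (m : ℕ) ≤ C.r i ∧ P.step m = true).card

/-- The growth sequence `p_1, …, p_n` associated with a natural chord labeling:
`p i = #{j<i : l j < l i} + #{j<i : r j < l i}`. -/
def seqOf {n : ℕ} {P : DyckPath n} (C : ChordLabeling P) (i : Fin n) : ℕ :=
  (Finset.univ.filter fun j : Fin n => j < i ∧ C.l j < C.l i).card +
    (Finset.univ.filter fun j : Fin n => j < i ∧ C.r j < C.l i).card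

/-- `σ` is the standardization of the word `w` (with distinct letters). -/
def IsStandardization {n : ℕ} (w : Fin n → ℕ) (σ : Equiv.Perm (Fin n)) : Prop :=
  ∀ i j : Fin n, σ i < σ j ↔ w i < w j

/-- `σ ∈ 𝓛(P_λ)`: σ is `L₀ ∘ L⁻¹` for some natural labeling `L` of the chord poset,
equivalently the standardization of the word of left endpoints of a natural labeling. -/
def LinExt {n : ℕ} (P : DyckPath n) (σ : Equiv.Perm (Fin n)) : Prop :=
  ∃ C : ChordLabeling P, IsStandardization C.l σ

/-- Successor index in `Fin n` (used only under the guard `i+1 < n`). -/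
def nextIdx {n : ℕ} (i : Fin n) : Fin n := ⟨((i : ℕ) + 1) % n, Nat.mod_lt _ i.pos⟩

/-- Descent set of a word: positions `i` with `i+1 < n` and `w i > w (i+1)`. -/
def descentFinset {n : ℕ} (w : Fin n → ℕ) : Finset (Fin n) :=
  Finset.univ.filter fun i => (i : ℕ) + 1 < n ∧ w (nextIdx i) < w i

/-- Number of inversions of a word. -/
def wordInv {n : ℕ} (w : Fin n → ℕ) : ℕ :=
  (Finset.univ.filter fun p : Fin n × Fin n => p.1 < p.2 ∧ w p.2 < w p.1).card

/-- The word of values of a permutation. -/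
def permWord {n : ℕ} (σ : Equiv.Perm (Fin n)) : Fin n → ℕ := fun i => (σ i : ℕ)

/-- inv(σ). -/
def permInv {n : ℕ} (σ : Equiv.Perm (Fin n)) : ℕ := wordInv (permWord σ)

/-- des(σ). -/
def permDes {n : ℕ} (σ : Equiv.Perm (Fin n)) : ℕ := (descentFinset (permWord σ)).card

/-- `REM_i(w) = {k > i : w i > w k > w (i+1)}`, the right embraced numbers. -/
def remSet {n : ℕ} (w : Fin n → ℕ) (i : Fin n) : Finset (Fin n) :=
  Finset.univ.filter fun k => i < k ∧ w (nextIdx i) < w k ∧ w k < w i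

/-- desdif(σ) = Σ_{i ∈ DES σ} (σ i − σ (i+1)). -/
def desdif {n : ℕ} (σ : Equiv.Perm (Fin n)) : ℕ :=
  ∑ i ∈ descentFinset (permWord σ), (permWord σ i - permWord σ (nextIdx i))

/-- res(σ) = Σ_{i ∈ DES σ} #{k < i : σ i > σ k > σ (i+1)}. -/
def resStat {n : ℕ} (σ : Equiv.Perm (Fin n)) : ℕ :=
  ∑ i ∈ descentFinset (permWord σ),
    (Finset.univ.filter fun k : Fin n =>
      k < i ∧ permWord σ (nextIdx i) < permWord σ k ∧ permWord σ k < permWord σ i).card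

/-- The Mahonian statistic mad(σ) = desdif(σ) + res(σ). -/
def mad {n : ℕ} (σ : Equiv.Perm (Fin n)) : ℕ := desdif σ + resStat σ

/-- σ avoids the pattern 231. -/
def Avoids231 {n : ℕ} (σ : Equiv.Perm (Fin n)) : Prop :=
  ¬∃ i j k : Fin n, i < j ∧ j < k ∧ σ k < σ i ∧ σ i < σ j

/-- The boxes of the skew shape `lam/mu` (with `mu` weakly above `lam`), each box
recorded by its bottom corner (a lattice point `(x, z)` with `z ≡ x + n (mod 2)`). -/
def skewCells {n : ℕ} (lam mu : DyckPath n) : Finset (ℤ × ℤ) :=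
  ((Finset.Icc (-(n : ℤ)) n) ×ˢ (Finset.Icc (0 : ℤ) n)).filter fun c =>
    lam.ht c.1 ≤ c.2 ∧ c.2 + 2 ≤ mu.ht c.1 ∧ (c.2 - c.1 - n) % 2 = 0

/-- A Dyck tile, recorded by the set of bottom corners of its boxes: these form
a Dyck-path shape, i.e. a ±1-step lattice path whose two ends are lowest. -/
def IsDyckTile (t : Finset (ℤ × ℤ)) : Prop :=
  ∃ (a b : ℤ) (f : ℤ → ℤ), a ≤ b ∧
    (∀ x : ℤ, a ≤ x → x < b → f (x + 1) = f x + 1 ∨ f (x + 1) = f x - 1) ∧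
    f b = f a ∧ (∀ x : ℤ, a ≤ x → x ≤ b → f a ≤ f x) ∧
    t = (Finset.Icc a b).image fun x => (x, f x)

/-- A Dyck tiling of order `n`: a tiling of the skew shape between two Dyck paths of
order `n` by Dyck tiles. -/
structure DyckTiling (n : ℕ) where
  lower : DyckPath n
  upper : DyckPath n
  below : ∀ x : ℤ, lower.ht x ≤ upper.ht x
  tiles : Finset (Finset (ℤ × ℤ))
  isDyck : ∀ t ∈ tiles, IsDyckTile t
  disj : ∀ t ∈ tiles, ∀ u ∈ tiles, t ≠ u → Disjoint t u
  cover : tiles.biUnion id = skewCells lower upper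

namespace DyckTiling

/-- Number of boxes of the skew shape. -/
def area {n : ℕ} (T : DyckTiling n) : ℕ := (skewCells T.lower T.upper).card

/-- Number of tiles. -/
def numTiles {n : ℕ} (T : DyckTiling n) : ℕ := T.tiles.card

/-- art(T) = (area(T) + tiles(T)) / 2. -/
def art {n : ℕ} (T : DyckTiling n) : ℕ := (T.area + T.numTiles) / 2

/-- dis(T): the number of step positions where the lower path steps down while the
upper path steps up. -/
def dis {n : ℕ} (T : DyckTiling n) : ℕ :=
  (Finset.univ.filter fun i : Fin (2 * n) =>
    T.lower.step i = false ∧ T.upper.step i = true).card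

/-- Cover-inclusiveness: whenever a tile has a box strictly above a box of another tile,
its horizontal extent is contained in that of the other tile. -/
def CoverInclusive {n : ℕ} (T : DyckTiling n) : Prop :=
  ∀ t ∈ T.tiles, ∀ u ∈ T.tiles,
    (∃ p ∈ t, ∃ q ∈ u, (p : ℤ × ℤ).1 = (q : ℤ × ℤ).1 ∧ (q : ℤ × ℤ).2 < (p : ℤ × ℤ).2) →
    ∀ p ∈ t, ∃ y : ℤ, ((p : ℤ × ℤ).1, y) ∈ u

end DyckTiling

/-- Height function of the spread at column `s` of a Dyck path. -/
def spreadHt {n : ℕ} (P : DyckPath n) (s x : ℤ) : ℤ :=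
  if x < s then P.ht (x + 1) else if x = s then P.ht s + 1 else P.ht (x - 1)

/-- Spread of a tile at column `s`: points left of `s` move left, points right of `s`
move right, and a point at column `s` is duplicated upward. -/
def spreadTile (s : ℤ) (t : Finset (ℤ × ℤ)) : Finset (ℤ × ℤ) :=
  ((t.filter fun p => p.1 ≤ s).image fun p => (p.1 - 1, p.2)) ∪
    ((t.filter fun p => p.1 = s).image fun p => (p.1, p.2 + 1)) ∪
    ((t.filter fun p => s ≤ p.1).image fun p => (p.1 + 1, p.2))

/-- Spread of a set of tiles at column `s`. -/
def spreadTiles (s : ℤ) (ts : Finset (Finset (ℤ × ℤ))) : Finset (Finset (ℤ × ℤ)) :=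
  ts.image (spreadTile s)

/-- Column `c` is eligible for a tiling with upper-boundary height function `h` and
tile set `ts`: the upper boundary has an up step ending at column `c`, and its point at
column `c` is not the top corner of a one-box tile. -/
def EligibleCol (h : ℤ → ℤ) (ts : Finset (Finset (ℤ × ℤ))) (c : ℤ) : Prop :=
  h c = h (c - 1) + 1 ∧ ({(c, h c - 2)} : Finset (ℤ × ℤ)) ∉ ts

/-- `T'` is the result of the strip-grow map applied to `(T, s)`: spread `T` at `s` and
add a one-box tile on each up step of the (spread) upper boundary starting at a column
`≥ s` (i.e. strictly to the right of column `s`). -/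
def StripGrowRel {n : ℕ} (T : DyckTiling n) (s : ℤ) (T' : DyckTiling (n + 1)) : Prop :=
  (∀ x : ℤ, T'.lower.ht x = spreadHt T.lower s x) ∧
  (∀ x : ℤ, T'.upper.ht x =
    if s ≤ x ∧ spreadHt T.upper s (x + 1) = spreadHt T.upper s x + 1 then
      spreadHt T.upper s x + 2
    else spreadHt T.upper s x) ∧
  T'.tiles = spreadTiles s T.tiles ∪
    ((Finset.Icc s (n : ℤ)).filter fun x =>
        spreadHt T.upper s (x + 1) = spreadHt T.upper s x + 1).image
      (fun x => ({(x, spreadHt T.upper s x)} : Finset (ℤ × ℤ)))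

/-- `T'` is the result of the ribbon-grow map applied to `(T, s)`: spread `T` at `s`,
and if the special column `Q` of the spread tiling is strictly right of `s`, add a
ribbon of one-box tiles at all columns strictly between `s` and `Q`. -/
def RibbonGrowRel {n : ℕ} (T : DyckTiling n) (s : ℤ) (T' : DyckTiling (n + 1)) : Prop :=
  (∀ x : ℤ, T'.lower.ht x = spreadHt T.lower s x) ∧
  ∃ Q : ℤ,
    EligibleCol (spreadHt T.upper s) (spreadTiles s T.tiles) Q ∧
    (∀ c : ℤ, EligibleCol (spreadHt T.upper s) (spreadTiles s T.tiles) c → c ≤ Q) ∧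
    (∀ x : ℤ, T'.upper.ht x =
      if s < x ∧ x < Q then spreadHt T.upper s x + 2 else spreadHt T.upper s x) ∧
    T'.tiles = spreadTiles s T.tiles ∪
      (Finset.Ioo s Q).image (fun x => ({(x, spreadHt T.upper s x)} : Finset (ℤ × ℤ)))

/-- `s` is the special column of `T`: its rightmost eligible column. -/
def SpecialCol {n : ℕ} (T : DyckTiling n) (s : ℤ) : Prop :=
  EligibleCol T.upper.ht T.tiles s ∧ ∀ c : ℤ, EligibleCol T.upper.ht T.tiles c → c ≤ s

/-- In the strip-shrink map applied to `T'` with special column `s`, a one-box tile is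
removed at column `x`: `x` is right of `s` and there is a one-box tile there that is
part of an up step of the upper boundary. -/
def StripRemovedAt {n : ℕ} (T' : DyckTiling n) (s x : ℤ) : Prop :=
  s < x ∧ T'.upper.ht x = T'.upper.ht (x - 1) + 1 ∧
    ({(x, T'.upper.ht x - 2)} : Finset (ℤ × ℤ)) ∈ T'.tiles

instance {n : ℕ} (T' : DyckTiling n) (s x : ℤ) : Decidable (StripRemovedAt T' s x) := by
  unfold StripRemovedAt; infer_instance

/-- `(T, s)` is the result of the strip-shrink map applied to `T'`: `s` is the special
column of `T'`; all one-box tiles right of `s` lying on up steps of the upper boundary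
are removed; and the result is the spread of `T` at `s`. -/
def StripShrinkRel {n : ℕ} (T' : DyckTiling (n + 1)) (T : DyckTiling n) (s : ℤ) : Prop :=
  SpecialCol T' s ∧
  (∀ x : ℤ, spreadHt T.lower s x = T'.lower.ht x) ∧
  (∀ x : ℤ, spreadHt T.upper s x =
    if StripRemovedAt T' s x then T'.upper.ht x - 2 else T'.upper.ht x) ∧
  spreadTiles s T.tiles =
    T'.tiles \ (((Finset.Ioc s ((n : ℤ) + 1)).filter fun x => StripRemovedAt T' s x).image
      fun x => ({(x, T'.upper.ht x - 2)} : Finset (ℤ × ℤ)))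

/-- `(T, s)` is the result of the ribbon-shrink map applied to `T'`: `s` is the special
column of `T'`; the maximal run of topmost one-box tiles in columns `s+1, s+2, …` is
removed; and the result is the spread of `T` at `s`. -/
def RibbonShrinkRel {n : ℕ} (T' : DyckTiling (n + 1)) (T : DyckTiling n) (s : ℤ) : Prop :=
  SpecialCol T' s ∧
  ∃ r : ℤ, s < r ∧
    (∀ x : ℤ, s < x → x < r → ({(x, T'.upper.ht x - 2)} : Finset (ℤ × ℤ)) ∈ T'.tiles) ∧
    ({(r, T'.upper.ht r - 2)} : Finset (ℤ × ℤ)) ∉ T'.tiles ∧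
    (∀ x : ℤ, spreadHt T.lower s x = T'.lower.ht x) ∧
    (∀ x : ℤ, spreadHt T.upper s x =
      if s < x ∧ x < r then T'.upper.ht x - 2 else T'.upper.ht x) ∧
    spreadTiles s T.tiles =
      T'.tiles \ ((Finset.Ioo s r).image fun x => ({(x, T'.upper.ht x - 2)} : Finset (ℤ × ℤ)))

/-- `IsDTS n p T`: `T` is the Dyck tiling `DTS(p_1, …, p_n)` (indices 0-based, so the
growth column for step `i` is `p i - i`). -/
inductive IsDTS : (n : ℕ) → (Fin n → ℕ) → DyckTiling n → Prop where
  | nil (p : Fin 0 → ℕ) (T : DyckTiling 0) : IsDTS 0 p T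
  | cons (n : ℕ) (p : Fin (n + 1) → ℕ) (T : DyckTiling n) (T' : DyckTiling (n + 1)) :
      IsDTS n (fun i => p i.castSucc) T →
      StripGrowRel T ((p (Fin.last n) : ℤ) - n) T' → IsDTS (n + 1) p T'

/-- `IsDTR n p T`: `T` is the Dyck tiling `DTR(p_1, …, p_n)`. -/
inductive IsDTR : (n : ℕ) → (Fin n → ℕ) → DyckTiling n → Prop where
  | nil (p : Fin 0 → ℕ) (T : DyckTiling 0) : IsDTR 0 p T
  | cons (n : ℕ) (p : Fin (n + 1) → ℕ) (T : DyckTiling n) (T' : DyckTiling (n + 1)) :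
      IsDTR n (fun i => p i.castSucc) T →
      RibbonGrowRel T ((p (Fin.last n) : ℤ) - n) T' → IsDTR (n + 1) p T'

/-- `T = DTS(λ, σ)`. -/
def IsDTSof {n : ℕ} (lam : DyckPath n) (σ : Equiv.Perm (Fin n)) (T : DyckTiling n) : Prop :=
  ∃ C : ChordLabeling lam, IsStandardization C.l σ ∧ IsDTS n (seqOf C) T

/-- `T = DTR(λ, σ)`. -/
def IsDTRof {n : ℕ} (lam : DyckPath n) (σ : Equiv.Perm (Fin n)) (T : DyckTiling n) : Prop :=
  ∃ C : ChordLabeling lam, IsStandardization C.l σ ∧ IsDTR n (seqOf C) T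

/-- Increment `a` if it exceeds `p`. -/
def bump (p a : ℕ) : ℕ := if p < a then a + 1 else a

/-- The perfect matching `match(p_1, …, p_n)` of `{1, …, 2n}`. -/
def matchSeq : (n : ℕ) → (Fin n → ℕ) → Finset (ℕ × ℕ)
  | 0, _ => ∅
  | n + 1, p =>
    ((matchSeq n fun i => p i.castSucc).image fun q =>
      (bump (p (Fin.last n)) q.1, bump (p (Fin.last n)) q.2)) ∪
      {(p (Fin.last n) + 1, 2 * (n + 1))}

/-- The number of nestings of a matching: pairs `(a,b)`, `(c,d)` with `c < a < b < d`. -/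
def nestings (M : Finset (ℕ × ℕ)) : ℕ :=
  ((M ×ˢ M).filter fun q => q.2.1 < q.1.1 ∧ q.1.1 < q.1.2 ∧ q.1.2 < q.2.2).card

/-- `w` is the min-word of `M`: the list of the smaller elements of the pairs of `M`,
sorted by the larger elements. -/
def IsMinWord (n : ℕ) (M : Finset (ℕ × ℕ)) (w : Fin n → ℕ) : Prop :=
  ∃ b : Fin n → ℕ, StrictMono b ∧ (∀ i, w i < b i) ∧
    M = Finset.univ.image fun i => (w i, b i)

/-- The number of tiles of `T` containing boxes over both endpoint columns of the
chord with endpoints at step positions `p < q`. -/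
def chordTileCount {n : ℕ} (T : DyckTiling n) (p q : ℕ) : ℕ :=
  (T.tiles.filter fun t =>
    (∃ c ∈ t, (c : ℤ × ℤ).1 = (p : ℤ) + 1 - n) ∧ (∃ c ∈ t, (c : ℤ × ℤ).1 = (q : ℤ) - n)).card

/-- A Dyck tableau of order `n` over the zigzag path `Z` of order `n+1`: a skew shape
`Z/μ` with `n` dots, one in each column of the skew shape through a valley of `Z`. -/
structure DyckTableau (n : ℕ) (Z : DyckPath (n + 1)) where
  upper : DyckPath (n + 1)
  below : ∀ x : ℤ, Z.ht x ≤ upper.ht x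
  dots : Finset (ℤ × ℤ)
  sub : dots ⊆ skewCells Z upper
  card_dots : dots.card = n
  valley : ∀ x : ℤ, Z.ht (x - 1) = Z.ht x + 1 → Z.ht (x + 1) = Z.ht x + 1 →
    (dots.filter fun c => c.1 = x).card = 1

/-- The `q`-integer `[m]_q = 1 + q + ⋯ + q^(m-1)` as a polynomial. -/
def qint (m : ℕ) : Polynomial ℤ := ∑ i ∈ Finset.range m, Polynomial.X ^ i

/-- The `q`-factorial `[n]_q!`. -/
def qfact (n : ℕ) : Polynomial ℤ := ∏ i ∈ Finset.range n, qint (i + 1)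

/-
Both growth maps spread a tiling at a column `s`, which creates a peak of the upper boundary not
topped by a one-box tile, and then add one-box tiles in such a way that `s` becomes the rightmost
eligible column of the result. Hence `s`, and then the added boxes, can be read off the result.

Conversely, start from any cover-inclusive tiling, take its rightmost eligible column `s` and remove
the boxes that the growth map would have added. The upper boundary then has a peak at `s` which is
not the top of a one-box tile, so the tile below this peak must turn down on both sides of `s`.
Cover-inclusiveness passes this on from every tile in column `s` to the next one below, and finally
to the lower path. A tiling whose tiles and boundaries all have a peak at `s`, or stay away from it,
is a spread. So growing is a bijection from the pairs of a tiling of order `n` and a column to the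
tilings of order `n + 1`.

On lower paths, spreading at `s = p - n` inserts a peak in front of step `p`. Giving the new chord
the largest label extends the sequence of a labeled path by the entry `p`, so the lower path of the
tiling grown from the sequence of a labeling of `λ` is `λ` itself.
-/

/-! ### Height functions -/

/-- The height functions of Dyck paths of order `n`, extended by `0` outside `[-n, n]`. -/
structure IsHt (n : ℕ) (h : ℤ → ℤ) : Prop where
  left : ∀ x : ℤ, x ≤ -n → h x = 0
  right : ∀ x : ℤ, (n : ℤ) ≤ x → h x = 0
  step : ∀ x : ℤ, -n ≤ x → x < n → h (x + 1) = h x + 1 ∨ h (x + 1) = h x - 1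
  nonneg : ∀ x : ℤ, 0 ≤ h x

namespace IsHt

variable {n : ℕ} {h : ℤ → ℤ}

theorem parity (H : IsHt n h) {x : ℤ} (hx : -n ≤ x) (hx' : x ≤ n) : (h x - x - n) % 2 = 0 := by
  induction x, hx using Int.leInduction with
  | base => simp [H.left (-n) le_rfl]
  | succ x hx ih =>
    have := H.step x hx (by omega)
    have := ih (by omega)
    omega

theorem le_add (H : IsHt n h) {x : ℤ} (hx : -n ≤ x) : h x ≤ x + n := by
  induction x, hx using Int.leInduction with
  | base => simp [H.left (-n) le_rfl]
  | succ x hx ih =>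
    rcases lt_or_ge x n with hxn | hxn
    · have := H.step x hx hxn
      omega
    · rw [H.right (x + 1) (by omega)]
      omega

theorem comp_neg (H : IsHt n h) : IsHt n (fun x => h (-x)) where
  left x hx := H.right _ (by omega)
  right x hx := H.left _ (by omega)
  step x hx hx' := by
    have := H.step (-(x + 1)) (by omega) (by omega)
    rw [show -(x + 1) + 1 = -x by ring] at this
    omega
  nonneg x := H.nonneg _

theorem le_order (H : IsHt n h) (x : ℤ) : h x ≤ n := by
  by_cases hl : x ≤ -n
  · have := H.left x hl; omega
  by_cases hr : (n : ℤ) ≤ x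
  · have := H.right x hr; omega
  have hle := H.le_add (x := x) (by omega)
  have hle' := H.comp_neg.le_add (x := -x) (by omega)
  rw [neg_neg] at hle'
  omega

end IsHt

/-- The number of steps `b` among the first `k` steps of a word. -/
def stepCount {m : ℕ} (w : Fin m → Bool) (b : Bool) (k : ℕ) : ℕ :=
  #{i : Fin m | (i : ℕ) < k ∧ w i = b}

section stepCount

variable {m : ℕ} (w : Fin m → Bool) (b : Bool)

theorem stepCount_zero : stepCount w b 0 = 0 := by
  simp [stepCount]

theorem stepCount_succ (i : Fin m) :
    stepCount w b (i + 1) = stepCount w b i + if w i = b then 1 else 0 := by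
  unfold stepCount
  split_ifs with hb
  · rw [← card_insert_of_notMem (a := i) (by simp)]
    congr 1
    ext j
    grind
  · rw [add_zero]
    congr 1
    ext j
    grind

theorem stepCount_all : stepCount w b m = #{i | w i = b} := by
  simp [stepCount]

theorem stepCount_true_add_false {k : ℕ} (hk : k ≤ m) :
    stepCount w true k + stepCount w false k = k := by
  induction k with
  | zero => simp [stepCount_zero]
  | succ k ih =>
    have ht := stepCount_succ w true ⟨k, hk⟩
    have hf := stepCount_succ w false ⟨k, hk⟩
    have := ih (by omega)
    cases h : w ⟨k, hk⟩ <;> simp only [h] at ht hf <;> simp at ht hf <;> omega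

end stepCount

namespace DyckPath

variable {n : ℕ} (P : DyckPath n)

theorem ht_eq_stepCount (k : ℕ) {x : ℤ} (hx : x + n = k) :
    P.ht x = (stepCount P.step true k : ℤ) - stepCount P.step false k := by
  simp only [ht, stepCount, hx, Nat.cast_lt]

theorem ht_of_le_neg {x : ℤ} (hx : x ≤ -n) : P.ht x = 0 := by
  have : ∀ i : Fin (2 * n), ¬ ((i : ℕ) : ℤ) < x + n := fun i => by omega
  simp [ht, this]

theorem ht_of_ge {x : ℤ} (hx : n ≤ x) : P.ht x = 0 := by
  have hi : ∀ i : Fin (2 * n), ((i : ℕ) : ℤ) < x + n := fun i => by omega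
  have h := stepCount_true_add_false P.step le_rfl
  rw [stepCount_all, stepCount_all, P.balanced] at h
  simp only [ht, hi, true_and, P.balanced]
  omega

theorem ht_step (i : Fin (2 * n)) :
    P.ht ((i : ℕ) - n + 1) = P.ht ((i : ℕ) - n) + if P.step i = true then 1 else -1 := by
  rw [P.ht_eq_stepCount (i + 1) (by push_cast; ring), P.ht_eq_stepCount i (by ring),
    stepCount_succ, stepCount_succ]
  cases P.step i <;> simp <;> ring

theorem isHt : IsHt n P.ht where
  left x hx := P.ht_of_le_neg hx
  right x hx := P.ht_of_ge hx
  step x hx hx' := by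
    have := P.ht_step ⟨(x + n).toNat, by omega⟩
    rw [show (((x + n).toNat : ℕ) : ℤ) - n = x by omega] at this
    rw [this]
    split_ifs
    · exact Or.inl rfl
    · exact Or.inr rfl
  nonneg x := by
    by_cases hl : x ≤ -n
    · rw [P.ht_of_le_neg hl]
    by_cases hr : n ≤ x
    · rw [P.ht_of_ge hr]
    rw [P.ht_eq_stepCount (x + n).toNat (by omega)]
    have := P.nonneg (x + n).toNat (by omega)
    simp only [stepCount]
    omega

theorem ht_injective {P Q : DyckPath n} (h : ∀ x, P.ht x = Q.ht x) : P = Q := by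
  have : P.step = Q.step := by
    funext i
    have hi := P.ht_step i
    rw [h, h, Q.ht_step i] at hi
    revert hi
    cases P.step i <;> cases Q.step i <;> simp
  cases P; cases Q; simp_all

end DyckPath

/-- The word of steps of a height function of order `n`. -/
def stepsOfHt (n : ℕ) (h : ℤ → ℤ) (i : Fin (2 * n)) : Bool :=
  decide (h ((i : ℕ) - n + 1) = h ((i : ℕ) - n) + 1)

namespace IsHt

variable {n : ℕ} {h : ℤ → ℤ}

theorem stepCount_sub (H : IsHt n h) {k : ℕ} (hk : k ≤ 2 * n) :
    (stepCount (stepsOfHt n h) true k : ℤ) - stepCount (stepsOfHt n h) false k =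
      h ((k : ℤ) - n) := by
  induction k with
  | zero => simp [stepCount_zero, H.left (-n) le_rfl]
  | succ k ih =>
    have ht := stepCount_succ (stepsOfHt n h) true ⟨k, hk⟩
    have hf := stepCount_succ (stepsOfHt n h) false ⟨k, hk⟩
    have hstep := H.step ((k : ℤ) - n) (by omega) (by omega)
    have := ih (by omega)
    push_cast
    rw [show (k : ℤ) + 1 - n = k - n + 1 by ring]
    by_cases hs : h ((k : ℤ) - n + 1) = h ((k : ℤ) - n) + 1 <;>
      simp only [stepsOfHt, hs, decide_true, decide_false] at ht hf <;> simp at ht hf <;> omega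

/-- The Dyck path with a given height function. -/
def toDyckPath (H : IsHt n h) : DyckPath n where
  step := stepsOfHt n h
  balanced := by
    have hsub := H.stepCount_sub le_rfl
    have hadd := stepCount_true_add_false (stepsOfHt n h) le_rfl
    rw [H.right _ (by push_cast; omega)] at hsub
    rw [← stepCount_all]
    omega
  nonneg k hk := by
    have hsub := H.stepCount_sub hk
    have := H.nonneg ((k : ℤ) - n)
    simp only [stepCount] at hsub
    omega

theorem ht_toDyckPath (H : IsHt n h) (x : ℤ) : H.toDyckPath.ht x = h x := by
  by_cases hl : x ≤ -n
  · rw [H.left x hl, DyckPath.ht_of_le_neg _ hl]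
  by_cases hr : n ≤ x
  · rw [H.right x hr, DyckPath.ht_of_ge _ hr]
  rw [DyckPath.ht_eq_stepCount _ (x + n).toNat (by omega)]
  exact (H.stepCount_sub (by omega)).trans (by congr 1; omega)

end IsHt

/-! ### Spreading at a column -/

/-- The spread at column `s` pulls columns back along `foldCol s`: the columns `s - 1`, `s` and
`s + 1` all come from column `s`. -/
def foldCol (s x : ℤ) : ℤ := if x < s then x + 1 else if x = s then s else x - 1

/-- A section of `foldCol s` that avoids the value `s`. -/
def unfoldCol (s x : ℤ) : ℤ := if x ≤ s then x - 1 else x + 1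

/-- Spread of a height function at column `s`; on heights of Dyck paths this is `spreadHt`. -/
def spreadFun (s : ℤ) (h : ℤ → ℤ) (x : ℤ) : ℤ :=
  if x < s then h (x + 1) else if x = s then h s + 1 else h (x - 1)

/-- The function `h` has a peak at column `s`. -/
def PeakAt (s : ℤ) (h : ℤ → ℤ) : Prop := h (s - 1) = h s - 1 ∧ h (s + 1) = h s - 1

section spreadFun

variable {s x : ℤ} {h : ℤ → ℤ} {n : ℕ}

theorem foldCol_unfoldCol (s x : ℤ) : foldCol s (unfoldCol s x) = x := by
  grind [foldCol, unfoldCol]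

theorem unfoldCol_ne (s x : ℤ) : unfoldCol s x ≠ s := by
  grind [unfoldCol]

theorem spreadFun_eq_foldCol (s : ℤ) (h : ℤ → ℤ) (x : ℤ) :
    spreadFun s h x = h (foldCol s x) + if x = s then 1 else 0 := by
  grind [spreadFun, foldCol]

theorem spreadFun_unfoldCol (s : ℤ) (h : ℤ → ℤ) (x : ℤ) : spreadFun s h (unfoldCol s x) = h x := by
  rw [spreadFun_eq_foldCol, foldCol_unfoldCol, if_neg (unfoldCol_ne s x), add_zero]

theorem spreadFun_injective (s : ℤ) : Function.Injective (spreadFun s) := fun g h e => by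
  funext x
  rw [← spreadFun_unfoldCol s g, e, spreadFun_unfoldCol]

theorem spreadFun_of_lt (hx : x < s) : spreadFun s h x = h (x + 1) := by
  simp [spreadFun, hx]

theorem spreadFun_self : spreadFun s h s = h s + 1 := by
  simp [spreadFun]

theorem spreadFun_of_gt (hx : s < x) : spreadFun s h x = h (x - 1) := by
  simp [spreadFun, hx.not_gt, hx.ne']

theorem peakAt_spreadFun (s : ℤ) (h : ℤ → ℤ) : PeakAt s (spreadFun s h) := by
  simp [PeakAt, spreadFun]

theorem PeakAt.exists_spreadFun_eq (hp : PeakAt s h) : ∃ g, spreadFun s g = h := by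
  refine ⟨fun x => h (unfoldCol s x), ?_⟩
  obtain ⟨hl, hr⟩ := hp
  funext x
  grind [spreadFun, unfoldCol]

theorem IsHt.spread (H : IsHt n h) (hs : -n ≤ s ∧ s ≤ n) : IsHt (n + 1) (spreadFun s h) where
  left x hx := by
    push_cast at hx
    rw [spreadFun_of_lt (by omega), H.left _ (by omega)]
  right x hx := by
    push_cast at hx
    rw [spreadFun_of_gt (by omega), H.right _ (by omega)]
  step x hx hx' := by
    push_cast at hx hx'
    have hstep := H.step (x + 1)
    have hstep' := H.step (x - 1)
    grind [spreadFun]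
  nonneg x := by
    have := H.nonneg (foldCol s x)
    rw [spreadFun_eq_foldCol]
    split_ifs <;> omega

theorem IsHt.of_spread (H : IsHt (n + 1) (spreadFun s h)) (hs : -n ≤ s ∧ s ≤ n) : IsHt n h where
  left x hx := by
    rw [← spreadFun_unfoldCol s h]
    exact H.left _ (by grind [unfoldCol])
  right x hx := by
    have hn := H.right (n + 1) (by simp)
    rw [← spreadFun_unfoldCol s h]
    by_cases hxs : x ≤ s
    · obtain rfl : x = n := by omega
      grind [spreadFun, unfoldCol]
    · exact H.right _ (by grind [unfoldCol])
  step x hx hx' := by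
    have hstep := H.step (x - 1) (by push_cast; omega) (by push_cast; omega)
    have hstep' := H.step (x + 1) (by push_cast; omega) (by push_cast; omega)
    grind [spreadFun]
  nonneg x := spreadFun_unfoldCol s h x ▸ H.nonneg _

theorem IsHt.peak_bounds (H : IsHt (n + 1) h) (hp : PeakAt s h) : -n ≤ s ∧ s ≤ n := by
  have hnonneg := H.nonneg (s - 1)
  have hleft := H.left s
  have hright := H.right s
  have hpeak := hp.1
  push_cast at hleft hright
  omega

end spreadFun

/-- The preimage of a box under the spread at column `s`, see `mem_spreadTile`. -/
def foldCell (s : ℤ) (c : ℤ × ℤ) : ℤ × ℤ := (foldCol s c.1, if c.1 = s then c.2 - 1 else c.2)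

/-- At column `s` the tile `t` has a peak, or it avoids the columns `s - 1`, `s` and `s + 1`. -/
def TilePeakAt (s : ℤ) (t : Finset (ℤ × ℤ)) : Prop :=
  ∀ z, ((s - 1, z) ∈ t ↔ (s, z + 1) ∈ t) ∧ ((s + 1, z) ∈ t ↔ (s, z + 1) ∈ t)

section spreadTile

variable {s x z : ℤ} {c : ℤ × ℤ} {t : Finset (ℤ × ℤ)}

theorem mem_spreadTile : c ∈ spreadTile s t ↔ foldCell s c ∈ t := by
  obtain ⟨x, z⟩ := c
  simp only [spreadTile, foldCell, foldCol, mem_union, mem_image, mem_filter, Prod.mk.injEq,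
    Prod.exists]
  constructor
  · rintro ((⟨a, b, ⟨hab, ha⟩, rfl, rfl⟩ | ⟨a, b, ⟨hab, rfl⟩, rfl, rfl⟩) |
      ⟨a, b, ⟨hab, ha⟩, rfl, rfl⟩) <;> grind
  · intro h
    rcases lt_trichotomy x s with hx | rfl | hx
    · exact Or.inl (Or.inl ⟨x + 1, z, by grind⟩)
    · exact Or.inl (Or.inr ⟨x, z - 1, by grind⟩)
    · exact Or.inr ⟨x - 1, z, by grind⟩

theorem foldCell_unfoldCol (s x z : ℤ) : foldCell s (unfoldCol s x, z) = (x, z) := by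
  simp [foldCell, foldCol_unfoldCol, unfoldCol_ne]

theorem mem_spreadTile_unfoldCol : (unfoldCol s x, z) ∈ spreadTile s t ↔ (x, z) ∈ t := by
  rw [mem_spreadTile, foldCell_unfoldCol]

theorem spreadTile_injective (s : ℤ) : Function.Injective (spreadTile s) := fun t u e => by
  ext ⟨x, z⟩
  rw [← mem_spreadTile_unfoldCol (s := s), e, mem_spreadTile_unfoldCol]

theorem spreadTiles_injective (s : ℤ) : Function.Injective (spreadTiles s) :=
  image_injective (spreadTile_injective s)

theorem tilePeakAt_spreadTile (s : ℤ) (t : Finset (ℤ × ℤ)) : TilePeakAt s (spreadTile s t) := by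
  simp [TilePeakAt, mem_spreadTile, foldCell, foldCol]

theorem TilePeakAt.exists_spreadTile_eq (ht : TilePeakAt s t) : ∃ u, spreadTile s u = t := by
  refine ⟨t.image (foldCell s), ?_⟩
  ext ⟨x, z⟩
  rw [mem_spreadTile, mem_image]
  refine ⟨?_, fun h => ⟨_, h, rfl⟩⟩
  rintro ⟨⟨y, w⟩, hyw, e⟩
  have := ht z
  have := ht w
  have := ht (z - 1)
  grind [foldCell, foldCol]

end spreadTile

/-- The function `f` restricted to `[a, b]` is a Dyck arc: a lattice path with steps `±1` whose two
end points are its lowest points. Dyck tiles are the graphs of Dyck arcs. -/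
structure IsDyckArc (a b : ℤ) (f : ℤ → ℤ) : Prop where
  le : a ≤ b
  step : ∀ x, a ≤ x → x < b → f (x + 1) = f x + 1 ∨ f (x + 1) = f x - 1
  ends : f b = f a
  min : ∀ x, a ≤ x → x ≤ b → f a ≤ f x

theorem isDyckTile_iff {t : Finset (ℤ × ℤ)} : IsDyckTile t ↔
    ∃ a b f, IsDyckArc a b f ∧ ∀ x z, (x, z) ∈ t ↔ a ≤ x ∧ x ≤ b ∧ z = f x := by
  have hgraph : ∀ (a b : ℤ) (f : ℤ → ℤ), t = (Icc a b).image (fun x => (x, f x)) ↔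
      ∀ x z, (x, z) ∈ t ↔ a ≤ x ∧ x ≤ b ∧ z = f x := by
    intro a b f
    simp only [Finset.ext_iff, Prod.forall, mem_image, mem_Icc, Prod.mk.injEq]
    grind
  constructor
  · rintro ⟨a, b, f, hab, hstep, hend, hmin, e⟩
    exact ⟨a, b, f, ⟨hab, hstep, hend, hmin⟩, (hgraph a b f).1 e⟩
  · rintro ⟨a, b, f, ⟨hab, hstep, hend, hmin⟩, e⟩
    exact ⟨a, b, f, hab, hstep, hend, hmin, (hgraph a b f).2 e⟩

namespace IsDyckArc

variable {a b s : ℤ} {f : ℤ → ℤ}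

theorem congr {g : ℤ → ℤ} (H : IsDyckArc a b f) (hfg : ∀ x, a ≤ x → x ≤ b → f x = g x) :
    IsDyckArc a b g := by
  obtain ⟨hab, hstep, hends, hmin⟩ := H
  refine ⟨hab, fun x hx hx' => ?_, ?_, fun x hx hx' => ?_⟩
  · rw [← hfg x hx hx'.le, ← hfg (x + 1) (by omega) (by omega)]
    exact hstep x hx hx'
  · rw [← hfg a le_rfl hab, ← hfg b hab le_rfl, hends]
  · rw [← hfg a le_rfl hab, ← hfg x hx hx']
    exact hmin x hx hx'

theorem spread (H : IsDyckArc a b f) (s : ℤ) :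
    IsDyckArc (unfoldCol s a) (if s ≤ b then b + 1 else b - 1) (spreadFun s f) := by
  have hab := H.le
  refine ⟨by grind [unfoldCol], fun x hx hx' => ?_, ?_, fun x hx hx' => ?_⟩
  · have hstep := H.step (x + 1)
    have hstep' := H.step (x - 1)
    grind [unfoldCol, spreadFun]
  · have := H.ends
    grind [unfoldCol, spreadFun]
  · have := H.min (foldCol s x)
    rw [spreadFun_unfoldCol, spreadFun_eq_foldCol]
    grind [unfoldCol, foldCol]

theorem of_spread {A B : ℤ} (H : IsDyckArc A B (spreadFun s f))
    (hs : B < s - 1 ∨ s + 1 < A ∨ A < s ∧ s < B) :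
    IsDyckArc (foldCol s A) (foldCol s B) f := by
  have hAB := H.le
  have hA : spreadFun s f A = f (foldCol s A) := by grind [spreadFun, foldCol]
  have hB : spreadFun s f B = f (foldCol s B) := by grind [spreadFun, foldCol]
  refine ⟨by grind [foldCol], fun x hx hx' => ?_, by rw [← hA, ← hB, H.ends], fun x hx hx' => ?_⟩
  · have hstep := H.step (x - 1)
    have hstep' := H.step (x + 1)
    grind [spreadFun, foldCol]
  · rw [← hA, ← spreadFun_unfoldCol s f x]
    exact H.min _ (by grind [unfoldCol, foldCol]) (by grind [unfoldCol, foldCol])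

end IsDyckArc

section tiles

variable {s x z : ℤ} {t : Finset (ℤ × ℤ)}

theorem isDyckTile_singleton (c : ℤ × ℤ) : IsDyckTile {c} :=
  ⟨c.1, c.1, fun _ => c.2, le_rfl, fun y hy hy' => by omega, rfl, fun _ _ _ => le_rfl, by simp⟩

theorem IsDyckTile.spread (ht : IsDyckTile t) (s : ℤ) : IsDyckTile (spreadTile s t) := by
  obtain ⟨a, b, f, H, e⟩ := isDyckTile_iff.1 ht
  refine isDyckTile_iff.2 ⟨_, _, _, H.spread s, fun x z => ?_⟩
  have := H.le
  rw [mem_spreadTile, foldCell, e, spreadFun_eq_foldCol]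
  grind [foldCol, unfoldCol]

theorem IsDyckTile.of_spread (ht : IsDyckTile (spreadTile s t)) : IsDyckTile t := by
  obtain ⟨A, B, F, H, e⟩ := isDyckTile_iff.1 ht
  have hAB := H.le
  have hpeak := tilePeakAt_spreadTile s t
  have hs : B < s - 1 ∨ s + 1 < A ∨ (A < s ∧ s < B ∧ PeakAt s F) := by
    have hl := hpeak (F (s - 1))
    have hm := hpeak (F s - 1)
    have hr := hpeak (F (s + 1))
    simp only [e] at hl hm hr
    grind [PeakAt]
  have hF : ∀ x, A ≤ x → x ≤ B → F x = spreadFun s (fun x => F (unfoldCol s x)) x := by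
    intro x hx hx'
    grind [spreadFun, unfoldCol, PeakAt]
  refine isDyckTile_iff.2 ⟨_, _, _, (H.congr hF).of_spread (by tauto), fun x z => ?_⟩
  rw [← mem_spreadTile_unfoldCol (s := s), e]
  grind [foldCol, unfoldCol]

end tiles

/-! ### Cover-inclusive tilings -/

namespace IsDyckTile

variable {t : Finset (ℤ × ℤ)} {x y z : ℤ}

theorem snd_unique (ht : IsDyckTile t) (hy : (x, y) ∈ t) (hz : (x, z) ∈ t) : y = z := by
  obtain ⟨a, b, f, -, e⟩ := isDyckTile_iff.1 ht
  rw [((e _ _).1 hy).2.2, ((e _ _).1 hz).2.2]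

theorem snd_succ (ht : IsDyckTile t) (hy : (x, y) ∈ t) (hz : (x + 1, z) ∈ t) :
    z = y + 1 ∨ z = y - 1 := by
  obtain ⟨a, b, f, H, e⟩ := isDyckTile_iff.1 ht
  obtain ⟨ha, -, rfl⟩ := (e _ _).1 hy
  obtain ⟨-, hb, rfl⟩ := (e _ _).1 hz
  exact H.step x ha (by omega)

theorem eq_singleton_or_mem_neighbors (ht : IsDyckTile t) (hz : (x, z) ∈ t)
    (hl : ∀ y, (x - 1, y) ∈ t → y < z) (hr : ∀ y, (x + 1, y) ∈ t → y < z) :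
    t = {(x, z)} ∨ (x - 1, z - 1) ∈ t ∧ (x + 1, z - 1) ∈ t := by
  obtain ⟨a, b, f, H, e⟩ := isDyckTile_iff.1 ht
  simp only [e] at hz hl hr
  obtain ⟨hax, hxb, rfl⟩ := hz
  have hends := H.ends
  have hstep := H.step x
  have hstep' := H.step (x - 1)
  have hmin := H.min (x - 1)
  have hmin' := H.min (x + 1)
  have hl := hl (f (x - 1))
  have hr := hr (f (x + 1))
  rw [sub_add_cancel] at hstep'
  have hx : a = x ∧ b = x ∨ a < x ∧ x < b := by
    rcases hax.eq_or_lt with rfl | hax <;> rcases hxb.eq_or_lt with rfl | hxb <;> grind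
  rcases hx with ⟨rfl, rfl⟩ | ⟨hax, hxb⟩
  · left
    ext ⟨y, w⟩
    simp only [e, mem_singleton, Prod.mk.injEq]
    grind
  · right
    simp only [e]
    grind

end IsDyckTile

/-- Cover-inclusive Dyck tilings of order `n` in terms of the height functions of the two
boundary paths. -/
structure IsCITiling (n : ℕ) (lo up : ℤ → ℤ) (ts : Finset (Finset (ℤ × ℤ))) : Prop where
  lo_isHt : IsHt n lo
  up_isHt : IsHt n up
  le : ∀ x, lo x ≤ up x
  dyck : ∀ t ∈ ts, IsDyckTile t
  disj : ∀ t ∈ ts, ∀ u ∈ ts, ∀ c, c ∈ t → c ∈ u → t = u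
  mem : ∀ x z, (∃ t ∈ ts, (x, z) ∈ t) ↔ lo x ≤ z ∧ z + 2 ≤ up x ∧ (z - x - n) % 2 = 0
  incl : ∀ t ∈ ts, ∀ u ∈ ts, ∀ x y z, (x, z) ∈ t → (x, y) ∈ u → y < z →
    ∀ a b, (a, b) ∈ t → ∃ c, (a, c) ∈ u

theorem IsHt.bounds_of_pos {n : ℕ} {h : ℤ → ℤ} {x : ℤ} (H : IsHt n h) (hx : 0 < h x) :
    -n < x ∧ x < n := by
  have hl := H.left x
  have hr := H.right x
  omega

theorem mem_skewCells {n : ℕ} {lam mu : DyckPath n} {x z : ℤ} :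
    (x, z) ∈ skewCells lam mu ↔
      lam.ht x ≤ z ∧ z + 2 ≤ mu.ht x ∧ (z - x - n) % 2 = 0 := by
  simp only [skewCells, mem_filter, mem_product, mem_Icc, and_iff_right_iff_imp]
  rintro ⟨hlo, hup, -⟩
  have hnonneg := lam.isHt.nonneg x
  have hle := mu.isHt.le_order x
  have hx := mu.isHt.bounds_of_pos (x := x) (by omega)
  omega

namespace DyckTiling

variable {n : ℕ}

theorem coverInclusive_iff (T : DyckTiling n) :
    T.CoverInclusive ↔ IsCITiling n T.lower.ht T.upper.ht T.tiles := by
  constructor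
  · intro H
    refine ⟨T.lower.isHt, T.upper.isHt, T.below, T.isDyck, fun t ht u hu c hct hcu => ?_,
      fun x z => ?_, fun t ht u hu x y z hz hy hyz a b hab =>
        H t ht u hu ⟨_, hz, _, hy, rfl, hyz⟩ _ hab⟩
    · by_contra hne
      exact disjoint_left.1 (T.disj t ht u hu hne) hct hcu
    · rw [← mem_skewCells, ← T.cover]
      simp
  · rintro H t ht u hu ⟨⟨x, z⟩, hz, ⟨_, y⟩, hy, rfl, hyz⟩ ⟨a, b⟩ hab
    exact H.incl t ht u hu _ _ _ hz hy hyz a b hab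

theorem ext_ht {T U : DyckTiling n} (hlo : ∀ x, T.lower.ht x = U.lower.ht x)
    (hup : ∀ x, T.upper.ht x = U.upper.ht x) (hts : T.tiles = U.tiles) : T = U := by
  have hlo := DyckPath.ht_injective hlo
  have hup := DyckPath.ht_injective hup
  cases T
  cases U
  congr

theorem tiles_eq_empty (T : DyckTiling 0) : T.tiles = ∅ := by
  refine eq_empty_of_forall_notMem fun t ht => ?_
  obtain ⟨a, b, f, H, e⟩ := isDyckTile_iff.1 (T.isDyck t ht)
  have ha : (a, f a) ∈ T.tiles.biUnion id := mem_biUnion.2 ⟨t, ht, (e _ _).2 ⟨le_rfl, H.le, rfl⟩⟩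
  rw [T.cover, mem_skewCells] at ha
  have := T.lower.isHt.nonneg a
  have := T.upper.isHt.le_order a
  omega

theorem eq_of_order_zero (T U : DyckTiling 0) : T = U := by
  have h0 : ∀ (P : DyckPath 0) x, P.ht x = 0 := fun P x => by simp [DyckPath.ht]
  exact ext_ht (by simp [h0]) (by simp [h0]) (by simp [tiles_eq_empty])

end DyckTiling

/-- The upper boundary `h` has a peak at column `s` that is not the top of a one-box tile. -/
def BarePeakAt (s : ℤ) (h : ℤ → ℤ) (ts : Finset (Finset (ℤ × ℤ))) : Prop :=
  PeakAt s h ∧ {(s, h s - 2)} ∉ ts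

namespace IsCITiling

variable {n : ℕ} {lo up : ℤ → ℤ} {ts : Finset (Finset (ℤ × ℤ))} {s : ℤ}

theorem exists_dyckTiling (H : IsCITiling n lo up ts) :
    ∃ T : DyckTiling n, T.lower.ht = lo ∧ T.upper.ht = up ∧ T.tiles = ts ∧ T.CoverInclusive := by
  have hlo := H.lo_isHt.ht_toDyckPath
  have hup := H.up_isHt.ht_toDyckPath
  obtain ⟨T, hTlo, hTup, hT⟩ : ∃ T : DyckTiling n,
      T.lower = H.lo_isHt.toDyckPath ∧ T.upper = H.up_isHt.toDyckPath ∧ T.tiles = ts := by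
    refine ⟨⟨H.lo_isHt.toDyckPath, H.up_isHt.toDyckPath, fun x => ?_, ts, H.dyck,
      fun t ht u hu hne => ?_, ?_⟩, rfl, rfl, rfl⟩
    · rw [hlo, hup]
      exact H.le x
    · exact disjoint_left.2 fun c hct hcu => hne (H.disj t ht u hu c hct hcu)
    · ext ⟨x, z⟩
      rw [mem_skewCells, hlo, hup, ← H.mem]
      simp
  rw [← hTlo] at hlo
  rw [← hTup] at hup
  refine ⟨T, funext hlo, funext hup, hT, T.coverInclusive_iff.2 ?_⟩
  rwa [funext hlo, funext hup, hT]

theorem cell_bounds (H : IsCITiling n lo up ts) {t : Finset (ℤ × ℤ)} (ht : t ∈ ts) {x z : ℤ}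
    (h : (x, z) ∈ t) : lo x ≤ z ∧ z + 2 ≤ up x ∧ (z - x - n) % 2 = 0 :=
  (H.mem x z).1 ⟨t, ht, h⟩

theorem spread (H : IsCITiling n lo up ts) (hs : -n ≤ s ∧ s ≤ n) :
    IsCITiling (n + 1) (spreadFun s lo) (spreadFun s up) (spreadTiles s ts) where
  lo_isHt := H.lo_isHt.spread hs
  up_isHt := H.up_isHt.spread hs
  le x := by
    rw [spreadFun_eq_foldCol, spreadFun_eq_foldCol]
    have := H.le (foldCol s x)
    omega
  dyck := forall_mem_image.2 fun t ht => (H.dyck t ht).spread s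
  disj := by
    refine forall_mem_image.2 fun t ht => forall_mem_image.2 fun u hu c hct hcu => ?_
    rw [mem_spreadTile] at hct hcu
    rw [H.disj t ht u hu _ hct hcu]
  mem x z := by
    simp only [spreadTiles, mem_image, exists_exists_and_eq_and, mem_spreadTile, foldCell, H.mem,
      spreadFun_eq_foldCol]
    grind [foldCol]
  incl := by
    refine forall_mem_image.2 fun t ht => forall_mem_image.2 fun u hu x y z hz hy hyz a b hab => ?_
    rw [mem_spreadTile] at hz hy hab
    obtain ⟨c, hc⟩ := H.incl t ht u hu _ _ _ hz hy (by grind) _ _ hab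
    refine ⟨if a = s then c + 1 else c, mem_spreadTile.2 ?_⟩
    by_cases ha : a = s <;> simpa [foldCell, ha] using hc

theorem of_spread
    (H : IsCITiling (n + 1) (spreadFun s lo) (spreadFun s up) (spreadTiles s ts))
    (hs : -n ≤ s ∧ s ≤ n) : IsCITiling n lo up ts where
  lo_isHt := H.lo_isHt.of_spread hs
  up_isHt := H.up_isHt.of_spread hs
  le x := by
    rw [← spreadFun_unfoldCol s lo, ← spreadFun_unfoldCol s up]
    exact H.le _
  dyck t ht := (H.dyck _ (mem_image_of_mem _ ht)).of_spread
  disj := by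
    rintro t ht u hu ⟨x, z⟩ hct hcu
    rw [← mem_spreadTile_unfoldCol (s := s)] at hct hcu
    exact spreadTile_injective s
      (H.disj _ (mem_image_of_mem _ ht) _ (mem_image_of_mem _ hu) _ hct hcu)
  mem x z := by
    have := H.mem (unfoldCol s x) z
    simp only [spreadTiles, mem_image, exists_exists_and_eq_and, mem_spreadTile_unfoldCol,
      spreadFun_unfoldCol] at this
    rw [this]
    grind [unfoldCol]
  incl t ht u hu x y z hz hy hyz a b hab := by
    rw [← mem_spreadTile_unfoldCol (s := s)] at hz hy hab
    obtain ⟨c, hc⟩ :=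
      H.incl _ (mem_image_of_mem _ ht) _ (mem_image_of_mem _ hu) _ _ _ hz hy hyz _ _ hab
    exact ⟨c, mem_spreadTile_unfoldCol.1 hc⟩

theorem mem_neighbors_of_top (H : IsCITiling n lo up ts) (hp : BarePeakAt s up ts)
    {t : Finset (ℤ × ℤ)} (ht : t ∈ ts) (hst : (s, up s - 2) ∈ t) :
    (s - 1, up s - 3) ∈ t ∧ (s + 1, up s - 3) ∈ t := by
  obtain ⟨⟨hl, hr⟩, hs⟩ := hp
  have hcell := fun x z => H.cell_bounds (x := x) (z := z) ht
  rcases (H.dyck t ht).eq_singleton_or_mem_neighbors hst (by grind) (by grind) with rfl | h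
  · exact absurd ht hs
  · rwa [show up s - 3 = up s - 2 - 1 by ring]

/-- Cover-inclusiveness makes `t` extend as far as the tile `u` above it, and disjointness keeps
it from rising to the height of `u`. -/
theorem mem_neighbors_of_above (H : IsCITiling n lo up ts) {t u : Finset (ℤ × ℤ)} {z : ℤ}
    (ht : t ∈ ts) (hu : u ∈ ts) (hst : (s, z) ∈ t) (hsu : (s, z + 2) ∈ u)
    (hl : (s - 1, z + 1) ∈ u) (hr : (s + 1, z + 1) ∈ u) :
    (s - 1, z - 1) ∈ t ∧ (s + 1, z - 1) ∈ t := by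
  have hne : t ≠ u := by
    rintro rfl
    have := (H.dyck t ht).snd_unique hst hsu
    omega
  obtain ⟨c, hc⟩ := H.incl u hu t ht _ _ _ hsu hst (by omega) _ _ hl
  obtain ⟨d, hd⟩ := H.incl u hu t ht _ _ _ hsu hst (by omega) _ _ hr
  have hc_ne : c ≠ z + 1 := by
    rintro rfl
    exact hne (H.disj t ht u hu _ hc hl)
  have hd_ne : d ≠ z + 1 := by
    rintro rfl
    exact hne (H.disj t ht u hu _ hd hr)
  have hcs := (H.dyck t ht).snd_succ hc (by rwa [sub_add_cancel])
  have hds := (H.dyck t ht).snd_succ hst hd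
  obtain rfl : c = z - 1 := by omega
  obtain rfl : d = z - 1 := by omega
  exact ⟨hc, hd⟩

theorem mem_neighbors_of_peak (H : IsCITiling n lo up ts) (hp : BarePeakAt s up ts)
    {t : Finset (ℤ × ℤ)} (ht : t ∈ ts) {z : ℤ} (hst : (s, z + 1) ∈ t) :
    (s - 1, z) ∈ t ∧ (s + 1, z) ∈ t := by
  have hdepth : ∀ k : ℕ, ∀ t ∈ ts, (s, up s - 2 - 2 * k) ∈ t →
      (s - 1, up s - 3 - 2 * k) ∈ t ∧ (s + 1, up s - 3 - 2 * k) ∈ t := by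
    intro k
    induction k with
    | zero =>
      intro t ht hst
      simpa using H.mem_neighbors_of_top hp ht (by simpa using hst)
    | succ k ih =>
      intro t ht hst
      have hb := H.cell_bounds ht hst
      push_cast at hb hst ⊢
      obtain ⟨u, hu, hsu⟩ := (H.mem s (up s - 2 - 2 * k)).2 (by omega)
      obtain ⟨hl, hr⟩ := ih u hu hsu
      have := H.mem_neighbors_of_above ht hu hst (by convert hsu using 2; ring)
        (by convert hl using 2; ring) (by convert hr using 2; ring)
      convert this using 3 <;> ring
  have hb := H.cell_bounds ht hst
  have hpos := H.lo_isHt.nonneg s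
  have hx := H.up_isHt.bounds_of_pos (x := s) (by omega)
  have hpar := H.up_isHt.parity hx.1.le hx.2.le
  obtain ⟨k, hk⟩ : ∃ k : ℕ, z = up s - 3 - 2 * k := ⟨((up s - 3 - z) / 2).toNat, by omega⟩
  subst hk
  exact hdepth k t ht (by convert hst using 2; ring)

theorem peakAt_lo (H : IsCITiling n lo up ts) (hp : BarePeakAt s up ts) : PeakAt s lo := by
  have hpos := H.up_isHt.nonneg (s - 1)
  have hpeak := hp.1.1
  have hx := H.up_isHt.bounds_of_pos (x := s) (by omega)
  have hstep := H.lo_isHt.step (s - 1) (by omega) (by omega)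
  have hstep' := H.lo_isHt.step s (by omega) (by omega)
  rw [sub_add_cancel] at hstep
  rcases (H.le s).eq_or_lt with heq | hlt
  · have := H.le (s - 1)
    have := H.le (s + 1)
    have := hp.1.2
    exact ⟨by omega, by omega⟩
  · have hpar := H.up_isHt.parity hx.1.le hx.2.le
    have hpar' := H.lo_isHt.parity hx.1.le hx.2.le
    obtain ⟨t, ht, hz⟩ := (H.mem s (lo s)).2 ⟨le_rfl, by omega, hpar'⟩
    obtain ⟨hl, hr⟩ := H.mem_neighbors_of_peak hp ht (z := lo s - 1) (by simpa using hz)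
    have := (H.cell_bounds ht hl).1
    have := (H.cell_bounds ht hr).1
    exact ⟨by omega, by omega⟩

theorem tilePeakAt (H : IsCITiling n lo up ts) (hp : BarePeakAt s up ts) {t : Finset (ℤ × ℤ)}
    (ht : t ∈ ts) : TilePeakAt s t := by
  obtain ⟨hul, hur⟩ := hp.1
  obtain ⟨hll, hlr⟩ := H.peakAt_lo hp
  have hup : ∀ u ∈ ts, ∀ z, (s, z + 1) ∈ u → (s - 1, z) ∈ u ∧ (s + 1, z) ∈ u :=
    fun u hu z hz => H.mem_neighbors_of_peak hp hu hz
  refine fun z => ⟨⟨fun hz => ?_, fun hz => (hup t ht z hz).1⟩,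
    ⟨fun hz => ?_, fun hz => (hup t ht z hz).2⟩⟩ <;>
  · have hb := H.cell_bounds ht hz
    obtain ⟨u, hu, hzu⟩ := (H.mem s (z + 1)).2 (by omega)
    obtain ⟨hl, hr⟩ := hup u hu z hzu
    rwa [H.disj t ht u hu _ hz (by assumption)]

theorem exists_spread_eq (H : IsCITiling (n + 1) lo up ts) (hp : BarePeakAt s up ts) :
    ∃ lo' up' ts', IsCITiling n lo' up' ts' ∧ spreadFun s lo' = lo ∧ spreadFun s up' = up ∧
      spreadTiles s ts' = ts := by
  have hs := H.up_isHt.peak_bounds hp.1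
  have hts := fun t ht => H.tilePeakAt hp (t := t) ht
  obtain ⟨lo, rfl⟩ := (H.peakAt_lo hp).exists_spreadFun_eq
  obtain ⟨up, rfl⟩ := hp.1.exists_spreadFun_eq
  obtain ⟨ts, rfl⟩ : ∃ us, spreadTiles s us = ts := by
    choose! f hf using fun t ht => (hts t ht).exists_spreadTile_eq
    refine ⟨ts.image f, ?_⟩
    rw [spreadTiles, image_image]
    exact (image_congr hf).trans image_id
  exact ⟨lo, up, ts, H.of_spread hs, rfl, rfl, rfl⟩

end IsCITiling

/-- The height function `h` raised by one box in each of the columns `X`. -/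
def raise (X : Finset ℤ) (h : ℤ → ℤ) (x : ℤ) : ℤ := if x ∈ X then h x + 2 else h x

/-- The one-box tiles sitting on the path of height `h` in the columns `X`. -/
def topBoxes (h : ℤ → ℤ) (X : Finset ℤ) : Finset (Finset (ℤ × ℤ)) := X.image fun x => {(x, h x)}

section boxes

variable {X : Finset ℤ} {h : ℤ → ℤ} {x : ℤ} {t : Finset (ℤ × ℤ)}

theorem raise_of_mem (hx : x ∈ X) : raise X h x = h x + 2 := if_pos hx

theorem raise_of_notMem (hx : x ∉ X) : raise X h x = h x := if_neg hx

theorem raise_injective (X : Finset ℤ) : Function.Injective (raise X) := fun g h e => by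
  funext x
  have := congrFun e x
  grind [raise]

theorem mem_topBoxes : t ∈ topBoxes h X ↔ ∃ x ∈ X, {(x, h x)} = t := mem_image

theorem singleton_mem_topBoxes {z : ℤ} : {(x, z)} ∈ topBoxes h X ↔ x ∈ X ∧ z = h x := by
  simp only [mem_topBoxes, singleton_inj, Prod.mk.injEq]
  grind

end boxes

namespace IsCITiling

variable {n : ℕ} {lo up : ℤ → ℤ} {ts : Finset (Finset (ℤ × ℤ))} {X : Finset ℤ}
  {t : Finset (ℤ × ℤ)} {x z : ℤ}

theorem mem_union_topBoxes (H : IsCITiling n lo up ts) (ht : t ∈ ts ∪ topBoxes up X)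
    (hz : (x, z) ∈ t) :
    t ∈ ts ∧ z + 2 ≤ up x ∨ x ∈ X ∧ z = up x ∧ t = {(x, up x)} := by
  rcases mem_union.1 ht with ht | ht
  · exact Or.inl ⟨ht, (H.cell_bounds ht hz).2.1⟩
  · obtain ⟨y, hy, rfl⟩ := mem_topBoxes.1 ht
    rw [mem_singleton, Prod.mk.injEq] at hz
    obtain ⟨rfl, rfl⟩ := hz
    exact Or.inr ⟨hy, rfl, rfl⟩

theorem disjoint_topBoxes (H : IsCITiling n lo up ts) (X : Finset ℤ) :
    Disjoint ts (topBoxes up X) := by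
  refine disjoint_left.2 fun t ht htX => ?_
  obtain ⟨x, -, rfl⟩ := mem_topBoxes.1 htX
  have := H.cell_bounds ht (mem_singleton_self _)
  omega

theorem exists_mem_union_topBoxes (H : IsCITiling n lo up ts) :
    (∃ t ∈ ts ∪ topBoxes up X, (x, z) ∈ t) ↔ (∃ t ∈ ts, (x, z) ∈ t) ∨ x ∈ X ∧ z = up x := by
  constructor
  · rintro ⟨t, ht, hz⟩
    rcases H.mem_union_topBoxes ht hz with ⟨ht, -⟩ | ⟨hx, rfl, -⟩
    · exact Or.inl ⟨t, ht, hz⟩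
    · exact Or.inr ⟨hx, rfl⟩
  · rintro (⟨t, ht, hz⟩ | ⟨hx, rfl⟩)
    · exact ⟨t, mem_union_left _ ht, hz⟩
    · exact ⟨_, mem_union_right _ (mem_topBoxes.2 ⟨x, hx, rfl⟩), mem_singleton_self _⟩

theorem union_topBoxes (H : IsCITiling n lo up ts) (H' : IsHt n (raise X up)) :
    IsCITiling n lo (raise X up) (ts ∪ topBoxes up X) where
  lo_isHt := H.lo_isHt
  up_isHt := H'
  le x := by
    have := H.le x
    unfold raise
    split_ifs <;> omega
  dyck t ht := by
    rcases mem_union.1 ht with ht | ht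
    · exact H.dyck t ht
    · obtain ⟨x, -, rfl⟩ := mem_topBoxes.1 ht
      exact isDyckTile_singleton _
  disj := by
    rintro t ht u hu ⟨x, z⟩ hct hcu
    rcases H.mem_union_topBoxes ht hct with ⟨ht, hz⟩ | ⟨-, hz, rfl⟩ <;>
      rcases H.mem_union_topBoxes hu hcu with ⟨hu, hz'⟩ | ⟨-, hz', rfl⟩
    · exact H.disj t ht u hu _ hct hcu
    · omega
    · omega
    · rfl
  mem x z := by
    rw [H.exists_mem_union_topBoxes, H.mem]
    by_cases hx : x ∈ X
    · rw [raise_of_mem hx]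
      have := H.up_isHt.nonneg x
      have hbd := H'.bounds_of_pos (x := x) (by rw [raise_of_mem hx]; omega)
      have := H.up_isHt.parity hbd.1.le hbd.2.le
      have := H.le x
      simp only [hx, true_and]
      omega
    · simp [raise_of_notMem, hx]
  incl := by
    intro t ht u hu x y z hz hy hyz a b hab
    rcases H.mem_union_topBoxes ht hz with ⟨ht, hzup⟩ | ⟨-, hzup, rfl⟩
    · rcases H.mem_union_topBoxes hu hy with ⟨hu, -⟩ | ⟨-, hyup, -⟩
      · exact H.incl t ht u hu _ _ _ hz hy hyz a b hab
      · omega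
    · rw [mem_singleton, Prod.mk.injEq] at hab
      exact ⟨y, hab.1 ▸ hy⟩

theorem sdiff_topBoxes (H : IsCITiling n lo (raise X up) ts) (H' : IsHt n up)
    (hX : topBoxes up X ⊆ ts) : IsCITiling n lo up (ts \ topBoxes up X) where
  lo_isHt := H.lo_isHt
  up_isHt := H'
  le x := by
    by_cases hx : x ∈ X
    · exact (H.cell_bounds (hX (mem_topBoxes.2 ⟨x, hx, rfl⟩)) (mem_singleton_self _)).1
    · simpa only [raise_of_notMem hx] using H.le x
  dyck t ht := H.dyck t (mem_sdiff.1 ht).1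
  disj t ht u hu := H.disj t (mem_sdiff.1 ht).1 u (mem_sdiff.1 hu).1
  mem x z := by
    constructor
    · rintro ⟨t, ht, hz⟩
      obtain ⟨ht, hn⟩ := mem_sdiff.1 ht
      have hb := H.cell_bounds ht hz
      by_cases hx : x ∈ X
      · have hbox : {(x, up x)} ∈ topBoxes up X := mem_topBoxes.2 ⟨x, hx, rfl⟩
        have hb' := H.cell_bounds (hX hbox) (mem_singleton_self _)
        have hne : z ≠ up x := by
          rintro rfl
          exact hn (H.disj _ (hX hbox) t ht _ (mem_singleton_self _) hz ▸ hbox)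
        rw [raise_of_mem hx] at hb
        omega
      · rwa [raise_of_notMem hx] at hb
    · rintro ⟨hlo, hup, hpar⟩
      obtain ⟨t, ht, hz⟩ := (H.mem x z).2 ⟨hlo, by grind [raise], hpar⟩
      refine ⟨t, mem_sdiff.2 ⟨ht, fun hc => ?_⟩, hz⟩
      obtain ⟨y, -, rfl⟩ := mem_topBoxes.1 hc
      rw [mem_singleton, Prod.mk.injEq] at hz
      obtain ⟨rfl, rfl⟩ := hz
      omega
  incl t ht u hu := H.incl t (mem_sdiff.1 ht).1 u (mem_sdiff.1 hu).1

end IsCITiling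

/-! ### Growth rules -/

section growth

variable {m n : ℕ} {s c : ℤ} {h lo up : ℤ → ℤ} {X : Finset ℤ} {ts : Finset (Finset (ℤ × ℤ))}

theorem raise_surjective (X : Finset ℤ) : Function.Surjective (raise X) := fun h => by
  refine ⟨fun x => if x ∈ X then h x - 2 else h x, ?_⟩
  funext x
  grind [raise]

theorem IsHt.raise (H : IsHt m h)
    (hX : ∀ x ∈ X, -m < x ∧ x < m)
    (hstep : ∀ x : ℤ, -m ≤ x → x < m →
      raise X h (x + 1) = raise X h x + 1 ∨ raise X h (x + 1) = raise X h x - 1) :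
    IsHt m (raise X h) where
  left x hx := by
    rw [raise_of_notMem fun hxX => by have := hX x hxX; omega, H.left x hx]
  right x hx := by
    rw [raise_of_notMem fun hxX => by have := hX x hxX; omega, H.right x hx]
  step := hstep
  nonneg x := by
    have := H.nonneg x
    unfold _root_.raise
    split_ifs <;> omega

theorem IsCITiling.isHt_of_raise (H : IsCITiling m lo (raise X h) ts) (hX : topBoxes h X ⊆ ts)
    (hstep : ∀ x : ℤ, -m ≤ x → x < m → h (x + 1) = h x + 1 ∨ h (x + 1) = h x - 1) :
    IsHt m h := by
  have hbox : ∀ x ∈ X, 0 ≤ h x := fun x hx =>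
    (H.lo_isHt.nonneg x).trans
      (H.cell_bounds (hX (mem_topBoxes.2 ⟨x, hx, rfl⟩)) (mem_singleton_self _)).1
  refine ⟨fun x hx => ?_, fun x hx => ?_, hstep, fun x => ?_⟩
  · have := H.up_isHt.left x hx
    grind [raise]
  · have := H.up_isHt.right x hx
    grind [raise]
  · have := H.up_isHt.nonneg x
    grind [raise]

theorem raise_sub_two_mem_union_topBoxes {x : ℤ} (hx : x ∈ X) :
    {(x, raise X h x - 2)} ∈ ts ∪ topBoxes h X := by
  rw [raise_of_mem hx, add_sub_cancel_right]
  exact mem_union_right _ (singleton_mem_topBoxes.2 ⟨hx, rfl⟩)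

theorem singleton_mem_union_topBoxes {x z : ℤ} (hx : x ∉ X) :
    {(x, z)} ∈ ts ∪ topBoxes h X ↔ {(x, z)} ∈ ts := by
  rw [mem_union, singleton_mem_topBoxes, or_iff_left fun hz => hx hz.1]

theorem singleton_mem_sdiff_topBoxes {x z : ℤ} (hx : x ∉ X) :
    {(x, z)} ∈ ts \ topBoxes h X ↔ {(x, z)} ∈ ts := by
  rw [mem_sdiff, singleton_mem_topBoxes, and_iff_left fun hz => hx hz.1]

theorem IsHt.bounds_of_up (H : IsHt m h) (hc : h c = h (c - 1) + 1) : -m < c ∧ c < m :=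
  H.bounds_of_pos (by have := H.nonneg (c - 1); omega)

theorem IsHt.exists_isGreatest_eligibleCol (H : IsHt m h) (hc : ∃ c, EligibleCol h ts c) :
    ∃ Q, IsGreatest {c | EligibleCol h ts c} Q :=
  Int.exists_greatest_of_bdd ⟨m, fun _ hz => (H.bounds_of_up hz.1).2.le⟩ hc

theorem IsCITiling.exists_isGreatest_eligibleCol (H : IsCITiling (n + 1) lo up ts) :
    ∃ Q, IsGreatest {c | EligibleCol up ts c} Q := by
  have hleft := H.up_isHt.left (-n - 1) (by push_cast; omega)
  have hstep := H.up_isHt.step (-n - 1) (by push_cast; omega) (by push_cast; omega)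
  have hnonneg := H.up_isHt.nonneg (-n)
  rw [sub_add_cancel] at hstep
  refine H.up_isHt.exists_isGreatest_eligibleCol ⟨-n, by omega, fun hbox => ?_⟩
  have hbounds := H.cell_bounds hbox (mem_singleton_self _)
  have hlo := H.lo_isHt.nonneg (-n)
  omega

theorem barePeakAt_spread (s : ℤ) (h : ℤ → ℤ) (ts : Finset (Finset (ℤ × ℤ))) :
    BarePeakAt s (spreadFun s h) (spreadTiles s ts) := by
  refine ⟨peakAt_spreadFun s h, fun hmem => ?_⟩
  obtain ⟨t, -, ht⟩ := mem_image.1 hmem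
  have hpeak := tilePeakAt_spreadTile s t (spreadFun s h s - 2 - 1)
  rw [ht] at hpeak
  simp at hpeak

namespace BarePeakAt

theorem eligibleCol (hp : BarePeakAt s h ts) : EligibleCol h ts s :=
  ⟨by rw [hp.1.1]; ring, hp.2⟩

theorem eligibleCol_raise (hp : BarePeakAt s h ts) (hX : ∀ x ∈ X, s < x) :
    EligibleCol (raise X h) (ts ∪ topBoxes h X) s := by
  have hs : s ∉ X := fun hs => (hX s hs).false
  have hs' : s - 1 ∉ X := fun hs => absurd (hX _ hs) (by omega)
  refine ⟨?_, ?_⟩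
  · rw [raise_of_notMem hs, raise_of_notMem hs', hp.1.1]
    ring
  · rw [raise_of_notMem hs, singleton_mem_union_topBoxes hs]
    exact hp.2

end BarePeakAt

/-- A rule `R s h ts X` selecting the columns `X` in which a growth map adds one-box tiles to a
tiling with upper boundary `h` and tiles `ts` that has just been spread at column `s`, such that
the growth can be undone starting from the rightmost eligible column. -/
structure IsGrowthRule
    (R : ℤ → (ℤ → ℤ) → Finset (Finset (ℤ × ℤ)) → Finset ℤ → Prop) : Prop where
  exists_cols : ∀ {m lo h ts s}, IsCITiling m lo h ts → BarePeakAt s h ts → ∃ X, R s h ts X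
  isHt_raise : ∀ {m h ts s X}, IsHt m h → BarePeakAt s h ts → R s h ts X → IsHt m (raise X h)
  unique : ∀ {s h ts X Y}, R s h ts X → R s h ts Y → X = Y
  isGreatest : ∀ {m h ts s X}, IsHt m h → BarePeakAt s h ts → R s h ts X →
    IsGreatest {c | EligibleCol (raise X h) (ts ∪ topBoxes h X) c} s
  eq_of_raise_eq : ∀ {m h h' ts ts' s X Y}, IsHt m h → IsHt m h' →
    BarePeakAt s h ts → BarePeakAt s h' ts' →
    R s h ts X → R s h' ts' Y → raise X h = raise Y h' →
    ts ∪ topBoxes h X = ts' ∪ topBoxes h' Y → X = Y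
  exists_raise_eq : ∀ {m lo up ts s}, IsCITiling m lo up ts →
    IsGreatest {c | EligibleCol up ts c} s →
    ∃ X h, raise X h = up ∧ topBoxes h X ⊆ ts ∧ IsHt m h ∧
      BarePeakAt s h (ts \ topBoxes h X) ∧ R s h (ts \ topBoxes h X) X

end growth

/-- The strip-grow rule: the added boxes lie on the up steps right of column `s`. -/
def StripRule (s : ℤ) (h : ℤ → ℤ) (_ : Finset (Finset (ℤ × ℤ))) (X : Finset ℤ) : Prop :=
  ∀ x, x ∈ X ↔ s ≤ x ∧ h (x + 1) = h x + 1

namespace StripRule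

variable {m : ℕ} {s : ℤ} {h : ℤ → ℤ} {X : Finset ℤ} {ts : Finset (Finset (ℤ × ℤ))}

theorem isHt_raise (hX : StripRule s h ts X) (H : IsHt m h) (hp : BarePeakAt s h ts) :
    IsHt m (raise X h) := by
  refine H.raise (fun x hx => ?_) fun x hx hx' => ?_
  · have hup := ((hX x).1 hx).2
    have hbd := H.bounds_of_up (c := x + 1) (by simpa using hup)
    have hbd' := H.bounds_of_up hp.eligibleCol.1
    have := ((hX x).1 hx).1
    omega
  · obtain ⟨hl, hr⟩ := hp.1
    have hstep := H.step x hx hx'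
    have hmem := hX x
    have hmem' := hX (x + 1)
    grind [raise]

theorem mem_iff (hX : StripRule s h ts X) (H : IsHt m h) (hp : BarePeakAt s h ts) (x : ℤ) :
    x ∈ X ↔ s < x ∧ raise X h x = raise X h (x - 1) + 1 := by
  obtain ⟨hl, hr⟩ := hp.1
  have hbd := H.bounds_of_up hp.eligibleCol.1
  have hstep := H.step (x - 1)
  have hstep' := H.step x
  have hend' := H.right (x - 1)
  have hend := H.right (x + 1)
  have hmem := hX x
  have hmem' := hX (x - 1)
  rw [sub_add_cancel] at hstep hmem'
  grind [raise]

theorem isGreatest (hX : StripRule s h ts X) (H : IsHt m h) (hp : BarePeakAt s h ts) :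
    IsGreatest {c | EligibleCol (raise X h) (ts ∪ topBoxes h X) c} s := by
  refine ⟨hp.eligibleCol_raise fun x hx => ((hX.mem_iff H hp x).1 hx).1, fun c ⟨hup, hbox⟩ => ?_⟩
  by_contra! hsc
  exact hbox (raise_sub_two_mem_union_topBoxes ((hX.mem_iff H hp c).2 ⟨hsc, hup⟩))

theorem of_mem_iff_raise (hX : ∀ x, x ∈ X ↔ s < x ∧ raise X h x = raise X h (x - 1) + 1)
    (H : IsHt m h) (H' : IsHt m (raise X h)) (hup : raise X h s = raise X h (s - 1) + 1) :
    StripRule s h ts X := fun x => by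
  have hbd := H'.bounds_of_up hup
  have hstep := H'.step x
  have hmem := hX x
  have hmem' := hX (x + 1)
  have hend := H.right x
  have hend' := H'.right x
  clear hX
  grind [raise]

theorem exists_raise_eq {lo up : ℤ → ℤ} (H : IsCITiling m lo up ts)
    (hs : IsGreatest {c | EligibleCol up ts c} s) :
    ∃ X h, raise X h = up ∧ topBoxes h X ⊆ ts ∧ IsHt m h ∧
      BarePeakAt s h (ts \ topBoxes h X) ∧ StripRule s h (ts \ topBoxes h X) X := by
  have hbd := H.up_isHt.bounds_of_up hs.1.1
  obtain ⟨X, hX⟩ : ∃ X : Finset ℤ, ∀ x, x ∈ X ↔ s < x ∧ up x = up (x - 1) + 1 := by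
    refine ⟨{x ∈ Ioo s m | up x = up (x - 1) + 1}, fun x => ?_⟩
    have := H.up_isHt.bounds_of_up (c := x)
    simp only [mem_filter, mem_Ioo]
    tauto
  obtain ⟨h, rfl⟩ := raise_surjective X up
  have hbox : topBoxes h X ⊆ ts := fun t ht => by
    obtain ⟨x, hx, rfl⟩ := mem_topBoxes.1 ht
    by_contra hbox
    have hle : x ≤ s := hs.2 ⟨((hX x).1 hx).2, by rwa [raise_of_mem hx, add_sub_cancel_right]⟩
    exact hle.not_gt ((hX x).1 hx).1
  have hsX : s ∉ X := fun hx => ((hX s).1 hx).1.false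
  have Hh : IsHt m h := H.isHt_of_raise hbox fun x hx hx' => by
    have hstep := H.up_isHt.step x hx hx'
    have hmem := hX x
    have hmem' := hX (x + 1)
    grind [raise]
  refine ⟨X, h, rfl, hbox, Hh, ⟨?_, ?_⟩, of_mem_iff_raise hX Hh H.up_isHt hs.1.1⟩
  · have hup := hs.1.1
    have hstep := H.up_isHt.step s (by omega) (by omega)
    have hmem := hX (s - 1)
    have hmem' := hX (s + 1)
    constructor <;> grind [raise]
  · rw [singleton_mem_sdiff_topBoxes hsX, ← raise_of_notMem (h := h) hsX]
    exact hs.1.2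

end StripRule

theorem isGrowthRule_strip : IsGrowthRule StripRule where
  exists_cols {m lo h ts s} H _ := by
    refine ⟨{x ∈ Ico s m | h (x + 1) = h x + 1}, fun x => ?_⟩
    have := H.up_isHt.bounds_of_up (c := x + 1)
    rw [add_sub_cancel_right] at this
    simp only [mem_filter, mem_Ico]
    constructor
    · tauto
    · rintro ⟨hx, hup⟩
      exact ⟨⟨hx, by linarith [this hup]⟩, hup⟩
  isHt_raise H hp hX := hX.isHt_raise H hp
  unique hX hY := ext fun x => by rw [hX, hY]
  isGreatest H hp hX := hX.isGreatest H hp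
  eq_of_raise_eq H H' hp hp' hX hY e _ := ext fun x => by rw [hX.mem_iff H hp, hY.mem_iff H' hp', e]
  exists_raise_eq := StripRule.exists_raise_eq

/-- The ribbon-grow rule: the added boxes lie strictly between column `s` and the special column
`Q`; there are none when `Q = s`. -/
def RibbonRule (s : ℤ) (h : ℤ → ℤ) (ts : Finset (Finset (ℤ × ℤ))) (X : Finset ℤ) : Prop :=
  ∃ Q, IsGreatest {c | EligibleCol h ts c} Q ∧ X = Ioo s Q

section ribbon

variable {m : ℕ} {s Q R : ℤ} {h h' lo up : ℤ → ℤ} {ts ts' : Finset (Finset (ℤ × ℤ))}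

theorem BarePeakAt.le_of_isGreatest (hp : BarePeakAt s h ts)
    (hQ : IsGreatest {c | EligibleCol h ts c} Q) : s = Q ∨ s + 1 < Q := by
  have hle : s ≤ Q := hQ.2 hp.eligibleCol
  have hne : Q ≠ s + 1 := by
    rintro rfl
    have hup := hQ.1.1
    have hdown := hp.1.2
    rw [add_sub_cancel_right] at hup
    omega
  omega

theorem isHt_raise_Ioo (H : IsHt m h) (hp : BarePeakAt s h ts)
    (hQ : IsGreatest {c | EligibleCol h ts c} Q) : IsHt m (raise (Ioo s Q) h) := by
  have hs := H.bounds_of_up hp.eligibleCol.1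
  have hQm := H.bounds_of_up hQ.1.1
  refine H.raise (fun x hx => by rw [mem_Ioo] at hx; omega) fun x hx hx' => ?_
  have hstep := H.step x hx hx'
  have hdown := hp.1.2
  have hup := hQ.1.1
  grind [raise]

theorem isGreatest_raise_Ioo (hp : BarePeakAt s h ts)
    (hQ : IsGreatest {c | EligibleCol h ts c} Q) :
    IsGreatest {c | EligibleCol (raise (Ioo s Q) h) (ts ∪ topBoxes h (Ioo s Q)) c} s := by
  refine ⟨hp.eligibleCol_raise fun x hx => (mem_Ioo.1 hx).1, fun c ⟨hup, hbox⟩ => ?_⟩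
  have hsQ := hp.le_of_isGreatest hQ
  by_contra! hsc
  rcases lt_trichotomy c Q with hcQ | rfl | hQc
  · exact hbox (raise_sub_two_mem_union_topBoxes (mem_Ioo.2 ⟨hsc, hcQ⟩))
  · have hupQ := hQ.1.1
    grind [raise]
  · have hc : c ∉ Ioo s Q := fun hc => hQc.not_gt (mem_Ioo.1 hc).2
    have hc' : c - 1 ∉ Ioo s Q := fun hc' => by rw [mem_Ioo] at hc'; omega
    rw [singleton_mem_union_topBoxes hc, raise_of_notMem hc] at hbox
    rw [raise_of_notMem hc, raise_of_notMem hc'] at hup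
    exact hQc.not_ge (hQ.2 ⟨hup, hbox⟩)

/-- Column `Q` stops the ribbon: the grown upper boundary point above it is not the top of
a one-box tile or, when the ribbon is empty, is a peak. -/
theorem not_lt_of_raise_Ioo_eq (hp : BarePeakAt s h ts) (hp' : BarePeakAt s h' ts')
    (hQ : IsGreatest {c | EligibleCol h ts c} Q) (hR : IsGreatest {c | EligibleCol h' ts' c} R)
    (eh : raise (Ioo s Q) h = raise (Ioo s R) h')
    (ets : ts ∪ topBoxes h (Ioo s Q) = ts' ∪ topBoxes h' (Ioo s R)) : ¬ Q < R := by
  intro hQR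
  have hQ_notMem : Q ∉ Ioo s Q := right_notMem_Ioo
  rcases hp.le_of_isGreatest hQ with rfl | hsQ
  · have hsR := hp'.le_of_isGreatest hR
    have es := congrFun eh s
    have es' := congrFun eh (s + 1)
    have hdown := hp.1.2
    have hdown' := hp'.1.2
    grind [raise]
  · have hQ_mem : Q ∈ Ioo s R := mem_Ioo.2 ⟨by omega, hQR⟩
    have hbox := raise_sub_two_mem_union_topBoxes (h := h') (ts := ts') hQ_mem
    rw [← eh, ← ets, singleton_mem_union_topBoxes hQ_notMem, raise_of_notMem hQ_notMem] at hbox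
    exact hQ.1.2 hbox

theorem IsCITiling.exists_ribbon (H : IsCITiling m lo up ts)
    (hs : IsGreatest {c | EligibleCol up ts c} s) :
    ∃ r, s < r ∧ (∀ x ∈ Ioo s r, {(x, up x - 2)} ∈ ts) ∧ {(r, up r - 2)} ∉ ts ∧
      up r = up (r - 1) - 1 ∧ (s + 1 < r → up (s + 1) = up s + 1) := by
  have hsm := H.up_isHt.bounds_of_up hs.1.1
  have hm : {((m : ℤ), up m - 2)} ∉ ts := fun hbox => by
    have hcell := H.cell_bounds hbox (mem_singleton_self _)
    have hright := H.up_isHt.right m le_rfl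
    have hlo := H.lo_isHt.nonneg m
    omega
  obtain ⟨r, ⟨hsr, hr⟩, hleast⟩ := Int.exists_least_of_bdd
    (P := fun r : ℤ => s < r ∧ {(r, up r - 2)} ∉ ts) ⟨s, fun z hz => hz.1.le⟩ ⟨m, hsm.2, hm⟩
  have hrm := hleast m ⟨hsm.2, hm⟩
  have hrun : ∀ x ∈ Ioo s r, {(x, up x - 2)} ∈ ts := fun x hx => by
    by_contra hbox
    exact (mem_Ioo.1 hx).2.not_ge (hleast x ⟨(mem_Ioo.1 hx).1, hbox⟩)
  refine ⟨r, hsr, hrun, hr, ?_, fun hsr' => ?_⟩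
  · have hstep := H.up_isHt.step (r - 1) (by omega) (by omega)
    rw [sub_add_cancel] at hstep
    exact hstep.resolve_left fun hup => hsr.not_ge (hs.2 ⟨hup, hr⟩)
  · refine (H.up_isHt.step s hsm.1.le hsm.2).resolve_right fun hdown => ?_
    have hp : BarePeakAt s up ts := ⟨⟨by rw [hs.1.1]; ring, hdown⟩, hs.1.2⟩
    have hbox := hrun (s + 1) (mem_Ioo.2 ⟨by omega, hsr'⟩)
    have hmem := (H.tilePeakAt hp hbox _).2.1 (mem_singleton_self _)
    rw [mem_singleton, Prod.mk.injEq] at hmem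
    omega

theorem isGreatest_sdiff_topBoxes_Ioo {r : ℤ} (hsr : s < r) (hp : PeakAt s h)
    (hs : IsGreatest {c | EligibleCol (raise (Ioo s r) h) ts c} s)
    (hr : {(r, h r - 2)} ∉ ts) (hdown : h r = raise (Ioo s r) h (r - 1) - 1) :
    IsGreatest {c | EligibleCol h (ts \ topBoxes h (Ioo s r)) c} (if r = s + 1 then s else r) := by
  have hs_notMem : s ∉ Ioo s r := left_notMem_Ioo
  refine ⟨?_, fun c ⟨hup, hbox⟩ => ?_⟩
  · split_ifs with hrs
    · refine ⟨by rw [hp.1]; ring, ?_⟩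
      rw [singleton_mem_sdiff_topBoxes hs_notMem, ← raise_of_notMem (h := h) hs_notMem]
      exact hs.1.2
    · refine ⟨?_, fun hbox => hr (mem_sdiff.1 hbox).1⟩
      rw [hdown, raise_of_mem (mem_Ioo.2 ⟨by omega, by omega⟩)]
      ring
  · by_contra! hc
    have hrc : r < c := by
      have := hp.2
      grind
    have hc_notMem : c ∉ Ioo s r := fun hcX => hrc.not_gt (mem_Ioo.1 hcX).2
    have hc_notMem' : c - 1 ∉ Ioo s r := fun hcX => by rw [mem_Ioo] at hcX; omega
    rw [singleton_mem_sdiff_topBoxes hc_notMem] at hbox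
    refine (hsr.trans hrc).not_ge (hs.2 ⟨?_, ?_⟩)
    · rwa [raise_of_notMem hc_notMem, raise_of_notMem hc_notMem']
    · rwa [raise_of_notMem hc_notMem]

theorem RibbonRule.exists_raise_eq (H : IsCITiling m lo up ts)
    (hs : IsGreatest {c | EligibleCol up ts c} s) :
    ∃ X h, raise X h = up ∧ topBoxes h X ⊆ ts ∧ IsHt m h ∧
      BarePeakAt s h (ts \ topBoxes h X) ∧ RibbonRule s h (ts \ topBoxes h X) X := by
  obtain ⟨r, hsr, hrun, hr, hdown, hup⟩ := H.exists_ribbon hs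
  obtain ⟨h, rfl⟩ := raise_surjective (Ioo s r) up
  have hsX : s ∉ Ioo s r := left_notMem_Ioo
  have hrX : r ∉ Ioo s r := right_notMem_Ioo
  have hups := hs.1.1
  have hbox : topBoxes h (Ioo s r) ⊆ ts := fun t ht => by
    obtain ⟨x, hx, rfl⟩ := mem_topBoxes.1 ht
    simpa only [raise_of_mem hx, add_sub_cancel_right] using hrun x hx
  have Hh : IsHt m h := H.isHt_of_raise hbox fun x hx hx' => by
    have hstep := H.up_isHt.step x hx hx'
    grind [raise]
  have hp : PeakAt s h := by
    constructor <;> grind [raise]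
  rw [raise_of_notMem hrX] at hr hdown
  have hQ := isGreatest_sdiff_topBoxes_Ioo hsr hp hs hr hdown
  refine ⟨Ioo s r, h, rfl, hbox, Hh, ⟨hp, ?_⟩, _, hQ, ?_⟩
  · rw [singleton_mem_sdiff_topBoxes hsX, ← raise_of_notMem (h := h) hsX]
    exact hs.1.2
  · ext x
    grind

end ribbon

theorem isGrowthRule_ribbon : IsGrowthRule RibbonRule where
  exists_cols H hp :=
    have ⟨Q, hQ⟩ := H.up_isHt.exists_isGreatest_eligibleCol ⟨_, hp.eligibleCol⟩
    ⟨_, Q, hQ, rfl⟩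
  isHt_raise := by
    rintro m h ts s X H hp ⟨Q, hQ, rfl⟩
    exact isHt_raise_Ioo H hp hQ
  unique := by
    rintro s h ts X Y ⟨Q, hQ, rfl⟩ ⟨R, hR, rfl⟩
    rw [hQ.unique hR]
  isGreatest := by
    rintro m h ts s X - hp ⟨Q, hQ, rfl⟩
    exact isGreatest_raise_Ioo hp hQ
  eq_of_raise_eq := by
    rintro m h h' ts ts' s X Y - - hp hp' ⟨Q, hQ, rfl⟩ ⟨R, hR, rfl⟩ eh ets
    rw [le_antisymm (not_lt.1 (not_lt_of_raise_Ioo_eq hp' hp hR hQ eh.symm ets.symm))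
      (not_lt.1 (not_lt_of_raise_Ioo_eq hp hp' hQ hR eh ets))]
  exists_raise_eq := RibbonRule.exists_raise_eq

/-- `T'` is obtained from `T` by spreading at column `s` and then adding one-box tiles at the tops
of the columns selected by the rule `R`. -/
def Grow (R : ℤ → (ℤ → ℤ) → Finset (Finset (ℤ × ℤ)) → Finset ℤ → Prop) {n : ℕ}
    (T : DyckTiling n) (s : ℤ) (T' : DyckTiling (n + 1)) : Prop :=
  ∃ X, R s (spreadFun s T.upper.ht) (spreadTiles s T.tiles) X ∧
    T'.lower.ht = spreadFun s T.lower.ht ∧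
    T'.upper.ht = raise X (spreadFun s T.upper.ht) ∧
    T'.tiles = spreadTiles s T.tiles ∪ topBoxes (spreadFun s T.upper.ht) X

theorem stripGrowRel_iff_grow {n : ℕ} {T : DyckTiling n} {s : ℤ} {T' : DyckTiling (n + 1)} :
    StripGrowRel T s T' ↔ Grow StripRule T s T' := by
  have hrule : StripRule s (spreadFun s T.upper.ht) (spreadTiles s T.tiles)
      {x ∈ Icc s (n : ℤ) | spreadFun s T.upper.ht (x + 1) = spreadFun s T.upper.ht x + 1} :=
    fun x => by
      have hright := T.upper.isHt.right x
      have hright' := T.upper.isHt.right (x - 1)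
      simp only [mem_filter, mem_Icc]
      grind [spreadFun, foldCol]
  have hraise : ∀ {X : Finset ℤ} (x : ℤ), StripRule s (spreadFun s T.upper.ht)
      (spreadTiles s T.tiles) X → raise X (spreadFun s T.upper.ht) x = if s ≤ x ∧
        spreadFun s T.upper.ht (x + 1) = spreadFun s T.upper.ht x + 1 then
          spreadFun s T.upper.ht x + 2 else spreadFun s T.upper.ht x :=
    fun x hX => if_congr (hX x) rfl rfl
  constructor
  · rintro ⟨hlo, hup, hts⟩
    exact ⟨_, hrule, funext hlo, funext fun x => (hup x).trans (hraise x hrule).symm, hts⟩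
  · rintro ⟨X, hX, hlo, hup, hts⟩
    refine ⟨congrFun hlo, fun x => (congrFun hup x).trans (hraise x hX), ?_⟩
    exact hts.trans (by rw [isGrowthRule_strip.unique hX hrule]; rfl)

theorem ribbonGrowRel_iff_grow {n : ℕ} {T : DyckTiling n} {s : ℤ} {T' : DyckTiling (n + 1)} :
    RibbonGrowRel T s T' ↔ Grow RibbonRule T s T' := by
  have hraise : ∀ Q x, raise (Ioo s Q) (spreadFun s T.upper.ht) x =
      if s < x ∧ x < Q then spreadFun s T.upper.ht x + 2 else spreadFun s T.upper.ht x :=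
    fun Q x => if_congr mem_Ioo rfl rfl
  constructor
  · rintro ⟨hlo, Q, hQ, hmax, hup, hts⟩
    exact ⟨_, ⟨Q, ⟨hQ, hmax⟩, rfl⟩, funext hlo,
      funext fun x => (hup x).trans (hraise Q x).symm, hts⟩
  · rintro ⟨_, ⟨Q, hQ, rfl⟩, hlo, hup, hts⟩
    exact ⟨congrFun hlo, Q, hQ.1, fun c hc => hQ.2 hc,
      fun x => (congrFun hup x).trans (hraise Q x), hts⟩

section grow

variable {R : ℤ → (ℤ → ℤ) → Finset (Finset (ℤ × ℤ)) → Finset ℤ → Prop} {n : ℕ} {s s' : ℤ}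
  {T U : DyckTiling n} {T' U' : DyckTiling (n + 1)}

theorem DyckTiling.CoverInclusive.isCITiling_spread (hT : T.CoverInclusive) (hs : -n ≤ s ∧ s ≤ n) :
    IsCITiling (n + 1) (spreadFun s T.lower.ht) (spreadFun s T.upper.ht) (spreadTiles s T.tiles) :=
  (T.coverInclusive_iff.1 hT).spread hs

theorem Grow.coverInclusive (h : Grow R T s T') (hT : T.CoverInclusive) (hs : -n ≤ s ∧ s ≤ n) :
    T'.CoverInclusive := by
  obtain ⟨X, -, hlo, hup, hts⟩ := h
  have H' := T'.upper.isHt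
  rw [hup] at H'
  rw [T'.coverInclusive_iff, hlo, hup, hts]
  exact (hT.isCITiling_spread hs).union_topBoxes H'

namespace IsGrowthRule

theorem exists_grow (hR : IsGrowthRule R) (hT : T.CoverInclusive) (hs : -n ≤ s ∧ s ≤ n) :
    ∃ T', Grow R T s T' := by
  have H := hT.isCITiling_spread hs
  have hp := barePeakAt_spread s T.upper.ht T.tiles
  obtain ⟨X, hX⟩ := hR.exists_cols H hp
  obtain ⟨T', hlo, hup, hts, -⟩ :=
    (H.union_topBoxes (hR.isHt_raise H.up_isHt hp hX)).exists_dyckTiling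
  exact ⟨T', X, hX, hlo, hup, hts⟩

theorem grow_unique (hR : IsGrowthRule R) (h : Grow R T s T') (h' : Grow R T s U') : T' = U' := by
  obtain ⟨X, hX, hlo, hup, hts⟩ := h
  obtain ⟨Y, hY, hlo', hup', hts'⟩ := h'
  obtain rfl := hR.unique hX hY
  exact DyckTiling.ext_ht (congrFun (hlo.trans hlo'.symm)) (congrFun (hup.trans hup'.symm))
    (hts.trans hts'.symm)

theorem isGreatest_of_grow (hR : IsGrowthRule R) (hT : T.CoverInclusive) (hs : -n ≤ s ∧ s ≤ n)
    (h : Grow R T s T') : IsGreatest {c | EligibleCol T'.upper.ht T'.tiles c} s := by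
  obtain ⟨X, hX, -, hup, hts⟩ := h
  rw [hup, hts]
  exact hR.isGreatest (hT.isCITiling_spread hs).up_isHt (barePeakAt_spread s _ _) hX

theorem grow_injective (hR : IsGrowthRule R) (hT : T.CoverInclusive) (hU : U.CoverInclusive)
    (hs : -n ≤ s ∧ s ≤ n) (hs' : -n ≤ s' ∧ s' ≤ n) (h : Grow R T s T') (h' : Grow R U s' T') :
    T = U ∧ s = s' := by
  obtain rfl := (hR.isGreatest_of_grow hT hs h).unique (hR.isGreatest_of_grow hU hs' h')
  have HT := hT.isCITiling_spread hs
  have HU := hU.isCITiling_spread hs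
  obtain ⟨X, hX, hlo, hup, hts⟩ := h
  obtain ⟨Y, hY, hlo', hup', hts'⟩ := h'
  rw [hlo] at hlo'
  rw [hup] at hup'
  rw [hts] at hts'
  obtain rfl := hR.eq_of_raise_eq HT.up_isHt HU.up_isHt (barePeakAt_spread s _ _)
    (barePeakAt_spread s _ _) hX hY hup' hts'
  have hup_eq := raise_injective X hup'
  have htiles_eq : spreadTiles s T.tiles = spreadTiles s U.tiles := by
    rw [← union_sdiff_cancel_right (HT.disjoint_topBoxes X), hts', hup_eq,
      union_sdiff_cancel_right (HU.disjoint_topBoxes X)]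
  exact ⟨DyckTiling.ext_ht (congrFun (spreadFun_injective s hlo'))
    (congrFun (spreadFun_injective s hup_eq)) (spreadTiles_injective s htiles_eq), rfl⟩

theorem exists_shrink (hR : IsGrowthRule R) (hT : T'.CoverInclusive) :
    ∃ (T : DyckTiling n) (s : ℤ), T.CoverInclusive ∧ (-n ≤ s ∧ s ≤ n) ∧ Grow R T s T' := by
  have H := T'.coverInclusive_iff.1 hT
  obtain ⟨s, hs⟩ := H.exists_isGreatest_eligibleCol
  obtain ⟨X, h, hraise, hX, Hh, hp, hRX⟩ := hR.exists_raise_eq H hs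
  rw [← hraise] at H
  obtain ⟨lo, up, ts, HT, hlo, rfl, hts⟩ := (H.sdiff_topBoxes Hh hX).exists_spread_eq hp
  obtain ⟨T, rfl, rfl, rfl, hT⟩ := HT.exists_dyckTiling
  rw [← hts] at hRX
  refine ⟨T, s, hT, Hh.peak_bounds hp.1, X, hRX, hlo.symm, hraise.symm, ?_⟩
  rw [hts, sdiff_union_of_subset hX]

end IsGrowthRule

end grow

/-! ### Chord labelings and peak insertion -/

section chords

variable {n : ℕ} {P : DyckPath n}

namespace DyckPath

theorem pt_succ (P : DyckPath n) {k : ℕ} (hk : k < 2 * n) :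
    P.pt (k + 1) = P.pt k + if P.step ⟨k, hk⟩ = true then 1 else -1 := by
  rw [pt, pt, ← P.ht_step ⟨k, hk⟩]
  congr 1
  push_cast
  ring

theorem step_eq_true_iff (P : DyckPath n) {k : ℕ} (hk : k < 2 * n) :
    P.step ⟨k, hk⟩ = true ↔ P.pt k < P.pt (k + 1) := by
  rw [P.pt_succ hk]
  split_ifs with h <;> simp [h]

theorem step_eq_false_iff (P : DyckPath n) {k : ℕ} (hk : k < 2 * n) :
    P.step ⟨k, hk⟩ = false ↔ P.pt (k + 1) < P.pt k := by
  rw [P.pt_succ hk]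
  split_ifs with h <;> simp [h]

end DyckPath

theorem isChord_iff {p q : ℕ} : IsChord P p q ↔ p < q ∧ q < 2 * n ∧ P.pt (q + 1) = P.pt p ∧
    ∀ m : ℕ, p < m → m ≤ q → P.pt p < P.pt m := by
  constructor
  · rintro ⟨hpq, hq, -, -, hend, habove⟩
    exact ⟨hpq, hq, hend, habove⟩
  · rintro ⟨hpq, hq, hend, habove⟩
    refine ⟨hpq, hq, ⟨by omega, ?_⟩, ⟨hq, ?_⟩, hend, habove⟩
    · exact (P.step_eq_true_iff _).2 (habove _ (by omega) (by omega))
    · exact (P.step_eq_false_iff _).2 (hend ▸ habove _ hpq le_rfl)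

namespace IsChord

variable {a b c d : ℕ}

theorem step_left (h : IsChord P a b) : ∃ ha : a < 2 * n, P.step ⟨a, ha⟩ = true := h.2.2.1

theorem step_right (h : IsChord P a b) : ∃ hb : b < 2 * n, P.step ⟨b, hb⟩ = false := h.2.2.2.1

theorem nested (h : IsChord P a b) (h' : IsChord P c d) (hac : a < c) (hcb : c ≤ b) : d < b := by
  obtain ⟨-, -, hend, habove⟩ := isChord_iff.1 h
  obtain ⟨-, -, hend', habove'⟩ := isChord_iff.1 h'
  have hc := habove c hac hcb
  by_contra! hbd
  rcases hbd.eq_or_lt with rfl | hlt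
  · omega
  · have := habove' (b + 1) (by omega) (by omega)
    omega

theorem not_lt_right (h : IsChord P a b) (h' : IsChord P a d) : ¬ b < d := fun hbd => by
  obtain ⟨hab, -, hend, -⟩ := isChord_iff.1 h
  obtain ⟨-, -, -, habove'⟩ := isChord_iff.1 h'
  have := habove' (b + 1) (by omega) (by omega)
  omega

theorem right_unique (h : IsChord P a b) (h' : IsChord P a d) : b = d :=
  le_antisymm (not_lt.1 (h'.not_lt_right h)) (not_lt.1 (h.not_lt_right h'))

theorem left_unique (h : IsChord P a b) (h' : IsChord P c b) : a = c := by
  rcases lt_trichotomy a c with hac | hac | hac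
  · exact absurd (h.nested h' hac h'.1.le) (lt_irrefl _)
  · exact hac
  · exact absurd (h'.nested h hac h.1.le) (lt_irrefl _)

theorem right_ne_left (h : IsChord P a b) (h' : IsChord P c d) : b ≠ c := by
  rintro rfl
  obtain ⟨_, hfalse⟩ := h.step_right
  obtain ⟨_, htrue⟩ := h'.step_left
  simp [hfalse] at htrue

end IsChord

namespace DyckPath

variable {f : Fin n → ℕ} {b : Bool}

theorem image_eq_map_filter_step (hf : Function.Injective f)
    (hb : ∀ i, ∃ h : f i < 2 * n, P.step ⟨f i, h⟩ = b) :
    univ.image f = ({i | P.step i = b} : Finset (Fin (2 * n))).map Fin.valEmbedding := by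
  refine eq_of_subset_of_card_le (fun k hk => ?_) ?_
  · obtain ⟨i, -, rfl⟩ := mem_image.1 hk
    obtain ⟨h, hi⟩ := hb i
    exact mem_map.2 ⟨⟨f i, h⟩, by simpa using hi, rfl⟩
  · rw [card_map, card_image_of_injective _ hf, card_univ, Fintype.card_fin]
    have hsum := stepCount_true_add_false P.step le_rfl
    have hup := P.balanced
    rw [stepCount_all, stepCount_all] at hsum
    cases b <;> simp <;> omega

theorem card_filter_lt (hf : Function.Injective f)
    (hb : ∀ i, ∃ h : f i < 2 * n, P.step ⟨f i, h⟩ = b) (k : ℕ) :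
    #{j | f j < k} = stepCount P.step b k := by
  rw [stepCount, ← card_image_of_injective _ hf, ← card_map Fin.valEmbedding]
  have h := congrArg (filter (· < k)) (image_eq_map_filter_step hf hb)
  rw [filter_image, filter_map] at h
  rw [h]
  congr 2
  ext i
  simp [and_comm]

end DyckPath

namespace ChordLabeling

variable (C D : ChordLabeling P)

theorem r_injective : Function.Injective C.r := fun i j h =>
  C.inj ((C.chord i).left_unique (h ▸ C.chord j))

variable {C D} in
theorem ext_l (h : C.l = D.l) : C = D := by
  have hr : C.r = D.r := funext fun i => (C.chord i).right_unique (h ▸ D.chord i)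
  cases C
  cases D
  simp_all

theorem image_l_eq : univ.image C.l = univ.image D.l :=
  (DyckPath.image_eq_map_filter_step C.inj fun i => (C.chord i).step_left).trans
    (DyckPath.image_eq_map_filter_step D.inj fun i => (D.chord i).step_left).symm

theorem exists_l_eq {k : ℕ} (hk : k < 2 * n) (h : P.step ⟨k, hk⟩ = true) : ∃ i, C.l i = k := by
  have hmem : k ∈ univ.image C.l := by
    rw [DyckPath.image_eq_map_filter_step C.inj fun i => (C.chord i).step_left]
    exact mem_map.2 ⟨⟨k, hk⟩, by simpa using h, rfl⟩
  simpa using hmem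

end ChordLabeling

theorem seqOf_le (C : ChordLabeling P) (i : Fin n) : seqOf C i ≤ 2 * i := by
  have hcard : ∀ (q : Fin n → Prop) [DecidablePred q], #{j | j < i ∧ q j} ≤ (i : ℕ) :=
    fun q _ => (card_le_card fun j hj => mem_Iio.2 (mem_filter.1 hj).2.1).trans (Fin.card_Iio i).le
  have hl := hcard fun j => C.l j < C.l i
  have hr := hcard fun j => C.r j < C.l i
  unfold seqOf
  omega

end chords

/-- The position, after inserting a peak in front of step `p` of a path, of the step that was at
position `a`. -/
def shiftPos (p a : ℕ) : ℕ := if a < p then a else a + 2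

section shiftPos

variable {p a : ℕ}

theorem shiftPos_strictMono (p : ℕ) : StrictMono (shiftPos p) := fun a b h => by
  unfold shiftPos
  split_ifs <;> omega

theorem shiftPos_of_lt (h : a < p) : shiftPos p a = a := if_pos h

theorem shiftPos_of_le (h : p ≤ a) : shiftPos p a = a + 2 := if_neg h.not_gt

theorem shiftPos_ne (p a : ℕ) : shiftPos p a ≠ p := by
  unfold shiftPos
  split_ifs <;> omega

theorem exists_shiftPos_eq (h : a ≠ p) (h' : a ≠ p + 1) : ∃ b, shiftPos p b = a := by
  rcases lt_or_ge a p with hlt | hge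
  · exact ⟨a, shiftPos_of_lt hlt⟩
  · exact ⟨a - 2, by rw [shiftPos_of_le (by omega)]; omega⟩

end shiftPos

/-- `P` arises from `P'` by inserting a peak, consisting of steps `p` and `p + 1` of `P`. In terms
of height functions this is the spread of `P'` at the column `p - n`. -/
def IsPeakInsertion {n : ℕ} (p : ℕ) (P' : DyckPath n) (P : DyckPath (n + 1)) : Prop :=
  P.ht = spreadFun ((p : ℤ) - n) P'.ht

section insertion

variable {n p : ℕ} {P' : DyckPath n} {P : DyckPath (n + 1)}

theorem IsChord.exists_isPeakInsertion (h : IsChord P p (p + 1)) :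
    ∃ P' : DyckPath n, IsPeakInsertion p P' P := by
  obtain ⟨-, hp, hend, -⟩ := isChord_iff.1 h
  have hup := P.pt_succ (k := p) (by omega)
  rw [if_pos h.step_left.2] at hup
  have hpeak : PeakAt ((p : ℤ) - n) P.ht := by
    have hleft : (p : ℤ) - (n + 1 : ℕ) = p - n - 1 := by push_cast; ring
    have htop : ((p + 1 : ℕ) : ℤ) - (n + 1 : ℕ) = p - n := by push_cast; ring
    have hright : ((p + 1 + 1 : ℕ) : ℤ) - (n + 1 : ℕ) = p - n + 1 := by push_cast; ring
    rw [DyckPath.pt, DyckPath.pt, hleft] at hup hend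
    rw [htop] at hup
    rw [hright] at hend
    exact ⟨by omega, by omega⟩
  obtain ⟨g, hg⟩ := hpeak.exists_spreadFun_eq
  have H := P.isHt
  have hs := H.peak_bounds hpeak
  rw [← hg] at H
  refine ⟨(H.of_spread hs).toDyckPath, ?_⟩
  rw [IsPeakInsertion, ← hg]
  congr 1
  exact (funext (H.of_spread hs).ht_toDyckPath).symm

namespace IsPeakInsertion

theorem le (hP : IsPeakInsertion p P' P) : p ≤ 2 * n := by
  have hpeak := peakAt_spreadFun ((p : ℤ) - n) P'.ht
  rw [← hP] at hpeak
  have := P.isHt.peak_bounds hpeak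
  omega

theorem pt_of_le (hP : IsPeakInsertion p P' P) {k : ℕ} (hk : k ≤ p) : P.pt k = P'.pt k := by
  rw [DyckPath.pt, DyckPath.pt, hP, spreadFun_of_lt (by push_cast; omega)]
  congr 1
  push_cast
  ring

theorem pt_add_one (hP : IsPeakInsertion p P' P) : P.pt (p + 1) = P'.pt p + 1 := by
  rw [DyckPath.pt, DyckPath.pt, hP, ← spreadFun_self]
  congr 1
  push_cast
  ring

theorem pt_add_two (hP : IsPeakInsertion p P' P) {k : ℕ} (hk : p ≤ k) : P.pt (k + 2) = P'.pt k := by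
  rw [DyckPath.pt, DyckPath.pt, hP, spreadFun_of_gt (by push_cast; omega)]
  congr 1
  push_cast
  ring

theorem pt_shiftPos (hP : IsPeakInsertion p P' P) (a : ℕ) : P.pt (shiftPos p a) = P'.pt a := by
  rcases lt_or_ge a p with h | h
  · rw [shiftPos_of_lt h, hP.pt_of_le h.le]
  · rw [shiftPos_of_le h, hP.pt_add_two h]

theorem pt_shiftPos_add_one (hP : IsPeakInsertion p P' P) (a : ℕ) :
    P.pt (shiftPos p a + 1) = P'.pt (a + 1) := by
  rcases lt_or_ge a p with h | h
  · rw [shiftPos_of_lt h, hP.pt_of_le h]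
  · rw [shiftPos_of_le h, add_right_comm, hP.pt_add_two (by omega)]

theorem isChord_peak (hP : IsPeakInsertion p P' P) : IsChord P p (p + 1) := by
  have hle := hP.le
  have hleft := hP.pt_of_le le_rfl
  have htop := hP.pt_add_one
  have hright := hP.pt_add_two le_rfl
  refine isChord_iff.2 ⟨by omega, by omega, hright.trans hleft.symm, fun m hm hm' => ?_⟩
  obtain rfl : m = p + 1 := by omega
  omega

theorem forall_lt_pt_shiftPos_iff (hP : IsPeakInsertion p P' P) {a b : ℕ} {z : ℤ} :
    (∀ m, shiftPos p a < m → m ≤ shiftPos p b → z < P.pt m) ↔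
      ∀ m, a < m → m ≤ b → z < P'.pt m := by
  constructor
  · intro h m ham hmb
    rw [← hP.pt_shiftPos]
    exact h _ (shiftPos_strictMono p ham) ((shiftPos_strictMono p).monotone hmb)
  · intro h m ham hmb
    by_cases hm : m = p ∨ m = p + 1
    · have hap : a < p := by
        by_contra! hpa
        rw [shiftPos_of_le hpa] at ham
        omega
      have hpb : p ≤ b := by
        by_contra! hbp
        rw [shiftPos_of_lt hbp] at hmb
        omega
      have hp := h p hap hpb
      rcases hm with rfl | rfl
      · rwa [hP.pt_of_le le_rfl]
      · rw [hP.pt_add_one]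
        omega
    · obtain ⟨k, rfl⟩ := exists_shiftPos_eq (p := p) (a := m) (by omega) (by omega)
      rw [hP.pt_shiftPos]
      exact h k ((shiftPos_strictMono p).lt_iff_lt.1 ham) ((shiftPos_strictMono p).le_iff_le.1 hmb)

theorem isChord_shiftPos_iff (hP : IsPeakInsertion p P' P) {a b : ℕ} :
    IsChord P (shiftPos p a) (shiftPos p b) ↔ IsChord P' a b := by
  have hle := hP.le
  have hlt : shiftPos p b < 2 * (n + 1) ↔ b < 2 * n := by
    unfold shiftPos
    split_ifs <;> omega
  rw [isChord_iff, isChord_iff, (shiftPos_strictMono p).lt_iff_lt, hlt, hP.pt_shiftPos,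
    hP.pt_shiftPos_add_one, hP.forall_lt_pt_shiftPos_iff]

end IsPeakInsertion

namespace ChordLabeling

theorem seqOf_last (C : ChordLabeling P) : seqOf C (Fin.last n) = C.l (Fin.last n) := by
  have hlr := (C.chord (Fin.last n)).1
  have hl := DyckPath.card_filter_lt C.inj (fun i => (C.chord i).step_left) (C.l (Fin.last n))
  have hr := DyckPath.card_filter_lt C.r_injective (fun i => (C.chord i).step_right)
    (C.l (Fin.last n))
  rw [← stepCount_true_add_false P.step (hlr.trans (C.chord (Fin.last n)).2.1).le, ← hl, ← hr,
    seqOf]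
  congr 2 <;> refine filter_congr fun j _ => and_iff_right_of_imp fun hj =>
    Fin.lt_last_iff_ne_last.2 ?_ <;> rintro rfl <;> omega

theorem r_last (C : ChordLabeling P) : C.r (Fin.last n) = C.l (Fin.last n) + 1 := by
  have hc := C.chord (Fin.last n)
  obtain ⟨hlr, hr, -, habove⟩ := isChord_iff.1 hc
  by_contra hne
  have hk : C.l (Fin.last n) + 1 < 2 * (n + 1) := by omega
  have hstep : P.step ⟨C.l (Fin.last n) + 1, hk⟩ = true := by
    by_contra hfalse
    have hup := P.pt_succ (k := C.l (Fin.last n)) (by omega)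
    have hdown := P.pt_succ hk
    rw [if_pos hc.step_left.2] at hup
    rw [if_neg hfalse] at hdown
    have := habove (C.l (Fin.last n) + 1 + 1) (by omega) (by omega)
    omega
  obtain ⟨j, hj⟩ := C.exists_l_eq hk hstep
  have := C.natural j (Fin.last n) (by omega) (hc.nested (C.chord j) (by omega) (by omega))
  exact absurd this (Fin.le_last j).not_gt

/-- `C` labels the chords of `P` as `C'` labels those of `P'`, except that the largest label goes
to the peak of `P` inserted at step `p`. -/
structure IsInsertLast (p : ℕ) (C' : ChordLabeling P') (C : ChordLabeling P) : Prop where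
  isPeakInsertion : IsPeakInsertion p P' P
  l_castSucc : ∀ i : Fin n, C.l i.castSucc = shiftPos p (C'.l i)
  r_castSucc : ∀ i : Fin n, C.r i.castSucc = shiftPos p (C'.r i)
  l_last : C.l (Fin.last n) = p

namespace IsInsertLast

variable {C' : ChordLabeling P'} {C : ChordLabeling P}

theorem seqOf_castSucc (h : IsInsertLast p C' C) (i : Fin n) :
    seqOf C i.castSucc = seqOf C' i := by
  have hcard : ∀ (q : Fin (n + 1) → Prop) (q' : Fin n → Prop) [DecidablePred q]
      [DecidablePred q'], (∀ j, q j.castSucc ↔ q' j) →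
      #{j | j < i.castSucc ∧ q j} = #{j | j < i ∧ q' j} := by
    intro q q' _ _ hq
    refine Eq.trans (congrArg card ?_) (card_map Fin.castSuccEmb)
    ext j
    induction j using Fin.lastCases with
    | last => simp [Fin.le_last, Fin.castSucc_ne_last]
    | cast j => simp [hq]
  unfold seqOf
  congr 1 <;> refine hcard _ _ fun j => ?_
  · rw [h.l_castSucc, h.l_castSucc, (shiftPos_strictMono p).lt_iff_lt]
  · rw [h.l_castSucc, h.r_castSucc, (shiftPos_strictMono p).lt_iff_lt]

theorem seqOf_last_eq (h : IsInsertLast p C' C) : seqOf C (Fin.last n) = p :=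
  (seqOf_last C).trans h.l_last

end IsInsertLast

theorem exists_isInsertLast (C' : ChordLabeling P') (hP : IsPeakInsertion p P' P) :
    ∃ C : ChordLabeling P, IsInsertLast p C' C := by
  have hmono := shiftPos_strictMono p
  let l : Fin (n + 1) → ℕ := Fin.snoc (α := fun _ => ℕ) (fun i => shiftPos p (C'.l i)) p
  let r : Fin (n + 1) → ℕ := Fin.snoc (α := fun _ => ℕ) (fun i => shiftPos p (C'.r i)) (p + 1)
  have hl_cast : ∀ i : Fin n, l i.castSucc = shiftPos p (C'.l i) := fun i => by simp [l]
  have hr_cast : ∀ i : Fin n, r i.castSucc = shiftPos p (C'.r i) := fun i => by simp [r]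
  have hl_last : l (Fin.last n) = p := by simp [l]
  have hr_last : r (Fin.last n) = p + 1 := by simp [r]
  refine ⟨⟨l, r, fun i => ?_, ?_, fun i j hl hr => ?_⟩, hP, hl_cast, hr_cast, hl_last⟩
  · induction i using Fin.lastCases with
    | last => rw [hl_last, hr_last]; exact hP.isChord_peak
    | cast i => rw [hl_cast, hr_cast]; exact hP.isChord_shiftPos_iff.2 (C'.chord i)
  · refine Fin.snoc_injective_iff.2 ⟨hmono.injective.comp C'.inj, ?_⟩
    rintro ⟨i, hi⟩
    exact shiftPos_ne p _ hi
  · induction j using Fin.lastCases with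
    | last =>
      induction i using Fin.lastCases with
      | last => exact absurd hl (lt_irrefl _)
      | cast i =>
        rw [hl_last, hl_cast] at hl
        rw [hr_last, hr_cast] at hr
        have := hmono (C'.chord i).1
        omega
    | cast j =>
      induction i using Fin.lastCases with
      | last => exact Fin.castSucc_lt_last j
      | cast i =>
        rw [hl_cast, hl_cast, hmono.lt_iff_lt] at hl
        rw [hr_cast, hr_cast, hmono.lt_iff_lt] at hr
        exact Fin.castSucc_lt_castSucc_iff.2 (C'.natural _ _ hl hr)

theorem exists_isInsertLast_of_succ (C : ChordLabeling P) :
    ∃ (P' : DyckPath n) (C' : ChordLabeling P'), IsInsertLast (C.l (Fin.last n)) C' C := by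
  set p := C.l (Fin.last n) with hp
  have hc := C.chord (Fin.last n)
  rw [C.r_last, ← hp] at hc
  obtain ⟨P', hP⟩ := hc.exists_isPeakInsertion
  have hmono := shiftPos_strictMono p
  have hne : ∀ i : Fin n, i.castSucc ≠ Fin.last n := fun i => (Fin.castSucc_lt_last i).ne
  choose l hl using fun i : Fin n => exists_shiftPos_eq (p := p) (a := C.l i.castSucc)
    (fun h => hne i (C.inj h)) (hc.right_ne_left (C.chord _)).symm
  choose r hr using fun i : Fin n => exists_shiftPos_eq (p := p) (a := C.r i.castSucc)
    ((C.chord _).right_ne_left hc) (fun h => hne i (C.r_injective (h.trans C.r_last.symm)))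
  refine ⟨P', ⟨l, r, fun i => ?_, fun i j h => ?_, fun i j hlt hlt' => ?_⟩,
    hP, fun i => (hl i).symm, fun i => (hr i).symm, rfl⟩
  · rw [← hP.isChord_shiftPos_iff, hl, hr]
    exact C.chord _
  · refine Fin.castSucc_injective _ (C.inj ?_)
    rw [← hl, h, hl]
  · rw [← hmono.lt_iff_lt, hl, hl] at hlt
    rw [← hmono.lt_iff_lt, hr, hr] at hlt'
    exact Fin.castSucc_lt_castSucc_iff.1 (C.natural _ _ hlt hlt')

end ChordLabeling

end insertion

theorem ChordLabeling.eq_of_seqOf_eq {n : ℕ} {P : DyckPath n} {C D : ChordLabeling P}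
    (h : seqOf C = seqOf D) : C = D := by
  induction n with
  | zero => exact ext_l (Subsingleton.elim _ _)
  | succ n ih =>
    obtain ⟨P₁, C', hC⟩ := C.exists_isInsertLast_of_succ
    obtain ⟨P₂, D', hD⟩ := D.exists_isInsertLast_of_succ
    have hlast : C.l (Fin.last n) = D.l (Fin.last n) := by rw [← seqOf_last, ← seqOf_last, h]
    rw [hlast] at hC
    obtain rfl : P₁ = P₂ := DyckPath.ht_injective (congrFun (spreadFun_injective _
      (hC.isPeakInsertion.symm.trans hD.isPeakInsertion)))
    obtain rfl : C' = D' :=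
      ih (funext fun i => by rw [← hC.seqOf_castSucc, ← hD.seqOf_castSucc, h])
    refine ext_l (funext fun i => ?_)
    induction i using Fin.lastCases with
    | last => exact hlast
    | cast i => rw [hC.l_castSucc, hD.l_castSucc]

section standardization

variable {n : ℕ} {w w' : Fin n → ℕ} {σ τ : Equiv.Perm (Fin n)}

theorem exists_isStandardization (hw : Function.Injective w) : ∃ σ, IsStandardization w σ := by
  have hm : StrictMono (w ∘ Tuple.sort w) :=
    (Tuple.monotone_sort w).strictMono_of_injective (hw.comp (Tuple.sort w).injective)
  refine ⟨(Tuple.sort w).symm, fun i j => ?_⟩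
  simp [← hm.lt_iff_lt]

namespace IsStandardization

theorem strictMono (h : IsStandardization w σ) : StrictMono (w ∘ σ.symm) := fun i j hij =>
  (h _ _).1 (by simpa using hij)

theorem unique (hσ : IsStandardization w σ) (hτ : IsStandardization w τ) : σ = τ := by
  have hcomp : w ∘ σ.symm = w ∘ τ.symm :=
    (StrictMono.range_inj hσ.strictMono hτ.strictMono).1 (by simp [Set.range_comp])
  have hw : Function.Injective w := by simpa using hσ.strictMono.injective
  have hsymm : σ.symm = τ.symm := Equiv.ext fun i => hw (congrFun hcomp i)
  simpa using congrArg Equiv.symm hsymm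

theorem eq_of_image_eq (h : IsStandardization w σ) (h' : IsStandardization w' σ)
    (himage : univ.image w = univ.image w') : w = w' := by
  have hrange : Set.range w = Set.range w' := by
    simpa using congrArg (fun s : Finset ℕ => (s : Set ℕ)) himage
  have hcomp : w ∘ σ.symm = w' ∘ σ.symm :=
    (StrictMono.range_inj h.strictMono h'.strictMono).1 (by simpa [Set.range_comp] using hrange)
  exact σ.symm.surjective.injective_comp_right hcomp

end IsStandardization

theorem ChordLabeling.eq_of_isStandardization {P : DyckPath n} {C D : ChordLabeling P}
    (hC : IsStandardization C.l σ) (hD : IsStandardization D.l σ) : C = D :=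
  ext_l (hC.eq_of_image_eq hD (C.image_l_eq D))

end standardization

/-! ### Iterated growth -/

/-- `T` is obtained from the empty tiling by growing successively at the columns `p i - i`, with
the rule `R`. -/
inductive GrowSeq (R : ℤ → (ℤ → ℤ) → Finset (Finset (ℤ × ℤ)) → Finset ℤ → Prop) :
    (n : ℕ) → (Fin n → ℕ) → DyckTiling n → Prop where
  | nil (p : Fin 0 → ℕ) (T : DyckTiling 0) : GrowSeq R 0 p T
  | cons {n : ℕ} {p : Fin (n + 1) → ℕ} {T : DyckTiling n} {T' : DyckTiling (n + 1)} :
      GrowSeq R n (fun i => p i.castSucc) T →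
      Grow R T ((p (Fin.last n) : ℤ) - n) T' → GrowSeq R (n + 1) p T'

section growSeq

variable {R : ℤ → (ℤ → ℤ) → Finset (Finset (ℤ × ℤ)) → Finset ℤ → Prop} {n : ℕ}
  {p q : Fin n → ℕ} {T U : DyckTiling n}

theorem isDTS_iff_growSeq : IsDTS n p T ↔ GrowSeq StripRule n p T := by
  constructor <;> intro h
  · induction h with
    | nil p T => exact .nil p T
    | cons n p T T' _ h ih => exact .cons ih (stripGrowRel_iff_grow.1 h)
  · induction h with
    | nil p T => exact .nil p T
    | cons _ h ih => exact .cons _ _ _ _ ih (stripGrowRel_iff_grow.2 h)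

theorem isDTR_iff_growSeq : IsDTR n p T ↔ GrowSeq RibbonRule n p T := by
  constructor <;> intro h
  · induction h with
    | nil p T => exact .nil p T
    | cons n p T T' _ h ih => exact .cons ih (ribbonGrowRel_iff_grow.1 h)
  · induction h with
    | nil p T => exact .nil p T
    | cons _ h ih => exact .cons _ _ _ _ ih (ribbonGrowRel_iff_grow.2 h)

theorem DyckTiling.nonempty_of_order_zero : Nonempty (DyckTiling 0) := by
  let P : DyckPath 0 := ⟨fun _ => true, by simp, by simp⟩
  refine ⟨⟨P, P, fun _ => le_rfl, ∅, by simp, by simp, ?_⟩⟩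
  ext c
  simp only [biUnion_empty, notMem_empty, skewCells, mem_filter, false_iff]
  omega

theorem growthCol_mem {p : Fin (n + 1) → ℕ} (hp : ∀ i, p i ≤ 2 * i) :
    -(n : ℤ) ≤ (p (Fin.last n) : ℤ) - n ∧ (p (Fin.last n) : ℤ) - n ≤ n := by
  have := hp (Fin.last n)
  rw [Fin.val_last] at this
  omega

theorem GrowSeq.coverInclusive (h : GrowSeq R n p T) (hp : ∀ i, p i ≤ 2 * i) :
    T.CoverInclusive := by
  induction h with
  | nil p T => simp [DyckTiling.CoverInclusive, T.tiles_eq_empty]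
  | cons _ h ih => exact h.coverInclusive (ih fun i => hp i.castSucc) (growthCol_mem hp)

theorem GrowSeq.lower_eq {P : DyckPath n} {C : ChordLabeling P} (h : GrowSeq R n (seqOf C) T) :
    T.lower = P := by
  induction n with
  | zero => exact DyckPath.ht_injective fun x => by simp [DyckPath.ht]
  | succ n ih =>
    obtain ⟨P', C', hC⟩ := C.exists_isInsertLast_of_succ
    cases h with
    | cons hU h =>
      simp only [hC.seqOf_castSucc] at hU
      obtain ⟨_, _, hlo, -⟩ := h
      rw [hC.seqOf_last_eq, ih hU] at hlo
      exact DyckPath.ht_injective (congrFun (hlo.trans hC.isPeakInsertion.symm))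

namespace IsGrowthRule

theorem exists_growSeq (hR : IsGrowthRule R) (hp : ∀ i, p i ≤ 2 * i) : ∃ T, GrowSeq R n p T := by
  induction n with
  | zero => exact DyckTiling.nonempty_of_order_zero.elim fun T => ⟨T, .nil p T⟩
  | succ n ih =>
    have hp' : ∀ i : Fin n, p i.castSucc ≤ 2 * i := fun i => hp i.castSucc
    obtain ⟨T, hT⟩ := ih hp'
    obtain ⟨T', hT'⟩ := hR.exists_grow (hT.coverInclusive hp') (growthCol_mem hp)
    exact ⟨T', .cons hT hT'⟩

theorem growSeq_unique (hR : IsGrowthRule R) (h : GrowSeq R n p T) (h' : GrowSeq R n p U) :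
    T = U := by
  induction h with
  | nil p T => exact T.eq_of_order_zero U
  | cons _ h ih =>
    cases h' with
    | cons hV h' =>
      obtain rfl := ih hV
      exact hR.grow_unique h h'

theorem growSeq_injective (hR : IsGrowthRule R) (hp : ∀ i, p i ≤ 2 * i) (hq : ∀ i, q i ≤ 2 * i)
    (h : GrowSeq R n p T) (h' : GrowSeq R n q T) : p = q := by
  induction h with
  | nil p T => exact Subsingleton.elim _ _
  | cons hU h ih =>
    cases h' with
    | cons hV h' =>
      have hp' := fun i : Fin _ => hp i.castSucc
      have hq' := fun i : Fin _ => hq i.castSucc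
      obtain ⟨rfl, hlast⟩ := hR.grow_injective (hU.coverInclusive hp') (hV.coverInclusive hq')
        (growthCol_mem hp) (growthCol_mem hq) h h'
      funext i
      induction i using Fin.lastCases with
      | last => omega
      | cast i => exact congrFun (ih hp' hq' hV) i

theorem exists_growSeq_seqOf (hR : IsGrowthRule R) (hT : T.CoverInclusive) :
    ∃ C : ChordLabeling T.lower, GrowSeq R n (seqOf C) T := by
  induction n with
  | zero =>
    exact ⟨⟨Fin.elim0, Fin.elim0, fun i => i.elim0, fun i => i.elim0, fun i => i.elim0⟩, .nil _ _⟩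
  | succ n ih =>
    obtain ⟨U, s, hU, hs, h⟩ := hR.exists_shrink hT
    obtain ⟨C', hC'⟩ := ih hU
    obtain ⟨p, rfl⟩ : ∃ p : ℕ, s = p - n := ⟨(s + n).toNat, by omega⟩
    have ⟨_, _, hlo, _⟩ := h
    obtain ⟨C, hC⟩ := C'.exists_isInsertLast hlo
    refine ⟨C, .cons (T := U) ?_ ?_⟩
    · simpa only [hC.seqOf_castSucc] using hC'
    · rwa [hC.seqOf_last_eq]

theorem existsUnique_growSeq (hR : IsGrowthRule R) {P : DyckPath n} {σ : Equiv.Perm (Fin n)}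
    (hσ : LinExt P σ) :
    ∃! T, ∃ C : ChordLabeling P, IsStandardization C.l σ ∧ GrowSeq R n (seqOf C) T := by
  obtain ⟨C, hC⟩ := hσ
  obtain ⟨T, hT⟩ := hR.exists_growSeq (seqOf_le C)
  refine ⟨T, ⟨C, hC, hT⟩, ?_⟩
  rintro U ⟨D, hD, hU⟩
  obtain rfl := ChordLabeling.eq_of_isStandardization hC hD
  exact hR.growSeq_unique hU hT

theorem existsUnique_linExt (hR : IsGrowthRule R) (hT : T.CoverInclusive) :
    ∃! σ, ∃ C : ChordLabeling T.lower, IsStandardization C.l σ ∧ GrowSeq R n (seqOf C) T := by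
  obtain ⟨C, hC⟩ := hR.exists_growSeq_seqOf hT
  obtain ⟨σ, hσ⟩ := exists_isStandardization C.inj
  refine ⟨σ, ⟨C, hσ, hC⟩, ?_⟩
  rintro τ ⟨D, hτ, hD⟩
  obtain rfl := ChordLabeling.eq_of_seqOf_eq
    (hR.growSeq_injective (seqOf_le C) (seqOf_le D) hC hD)
  exact hτ.unique hσ

end IsGrowthRule

end growSeq

/-- For each Dyck path `λ` of order `n`, the maps `σ ↦ DTS(λ,σ)` and
`σ ↦ DTR(λ,σ)` are bijections from linear extensions `𝓛(P_λ)` onto the cover-inclusive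
Dyck tilings whose lower path is `λ`. -/
theorem DTS_DTR_linear_extension_bijection (n : ℕ) (lam : DyckPath n) :
    (∀ σ : Equiv.Perm (Fin n), LinExt lam σ →
      (∃! T : DyckTiling n, IsDTSof lam σ T) ∧ (∃! T : DyckTiling n, IsDTRof lam σ T)) ∧
    (∀ (σ : Equiv.Perm (Fin n)) (T : DyckTiling n), LinExt lam σ →
      (IsDTSof lam σ T ∨ IsDTRof lam σ T) → T.CoverInclusive ∧ T.lower = lam) ∧
    (∀ T : DyckTiling n, T.CoverInclusive → T.lower = lam →
      (∃! σ : Equiv.Perm (Fin n), IsDTSof lam σ T) ∧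
      (∃! σ : Equiv.Perm (Fin n), IsDTRof lam σ T)) := by
  simp only [IsDTSof, IsDTRof, isDTS_iff_growSeq, isDTR_iff_growSeq]
  refine ⟨fun σ hσ => ?_, ?_, ?_⟩
  · exact ⟨isGrowthRule_strip.existsUnique_growSeq hσ, isGrowthRule_ribbon.existsUnique_growSeq hσ⟩
  · rintro σ T - (⟨C, -, h⟩ | ⟨C, -, h⟩) <;> exact ⟨h.coverInclusive (seqOf_le C), h.lower_eq⟩
  · rintro T hT rfl
    exact ⟨isGrowthRule_strip.existsUnique_linExt hT, isGrowthRule_ribbon.existsUnique_linExt hT⟩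

end
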